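/- arXiv:2505.24271 — 2 statements merged into one kernel-verified Lean document; each statement's English description precedes it below -/
import Mathlib

section
/- For every ε > 0 there exists C_ε > 0 with the following property. For all dyadic N, N₁, N₂, N₃ ≥ 1 and all m ∈ ℤ, the cardinality of S^{𝐍,(m)} satisfies |S^{𝐍,(m)}| ≤ C_ε · min( N₁² N₃² (min(N, N₂))^ε, N² N₂² (min(N₁, N₃))^ε, (min(N, N₂))² (N₁ N₃)^{1+ε}, (min(N₁, N₃))² (N N₂)^{1+ε} ), uniformly in m ∈ ℤ. -/
/-- Euclidean norm of a lattice point in `ℤ²`. -/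
noncomputable def znorm (n : ℤ × ℤ) : ℝ := Real.sqrt ((n.1 : ℝ) ^ 2 + (n.2 : ℝ) ^ 2)

/-- Squared Euclidean norm `|n|²` of `n ∈ ℤ²`, as an integer. -/
def nsq (n : ℤ × ℤ) : ℤ := n.1 ^ 2 + n.2 ^ 2

/-- `φ(n̄) = |n|² − |n₁|² + |n₂|² − |n₃|²`. -/
def phiFn (n n₁ n₂ n₃ : ℤ × ℤ) : ℤ := nsq n - nsq n₁ + nsq n₂ - nsq n₃

/-- `N` is a dyadic number: `N = 2^k` for some integer `k ≥ 0`. -/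
def IsDyadic (N : ℝ) : Prop := ∃ k : ℕ, N = 2 ^ k

/-- `|n| ∼ N`: for dyadic `N ≥ 2` this means `N/2 < |n| ≤ N`; for `N = 1` it means `|n| ≤ 1`. -/
def simDyadic (N : ℝ) (n : ℤ × ℤ) : Prop :=
  (N = 1 ∧ znorm n ≤ 1) ∨ (N ≠ 1 ∧ N / 2 < znorm n ∧ znorm n ≤ N)

/-- Membership in the set `S^{𝐍,(m)}`. -/
def SMem (N N₁ N₂ N₃ : ℝ) (m : ℤ) (n n₁ n₂ n₃ : ℤ × ℤ) : Prop :=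
  n = n₁ - n₂ + n₃ ∧ n ≠ n₁ ∧ n ≠ n₃ ∧ phiFn n n₁ n₂ n₃ = m ∧
    simDyadic N n ∧ simDyadic N₁ n₁ ∧ simDyadic N₂ n₂ ∧ simDyadic N₃ n₃ 


lemma aux_pow_bound (ε : ℝ) (hε : 0 < ε) (p e : ℕ) (hp : 2 ≤ p) :
    ((e : ℝ) + 1) ≤ (1 + 1 / (ε * Real.log 2)) * ((p : ℝ) ^ e) ^ ε := by
  have hl : 0 < Real.log 2 := Real.log_pos (by norm_num)
  have h1 : (1 : ℝ) + e * (ε * Real.log 2) ≤ ((2 : ℝ) ^ e) ^ ε := by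
    have : ((2 : ℝ) ^ e) ^ ε = Real.exp (e * (ε * Real.log 2)) := by
      rw [Real.rpow_def_of_pos (by positivity), Real.log_pow]
      ring_nf
    rw [this]
    linarith [Real.add_one_le_exp ((e : ℝ) * (ε * Real.log 2))]
  have h2 : ((2 : ℝ) ^ e) ^ ε ≤ ((p : ℝ) ^ e) ^ ε := by
    apply Real.rpow_le_rpow (by positivity) _ hε.le
    gcongr
    exact_mod_cast hp
  have h3 : (1 + 1 / (ε * Real.log 2)) * (1 + e * (ε * Real.log 2)) ≤
      (1 + 1 / (ε * Real.log 2)) * ((p : ℝ) ^ e) ^ ε := by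
    gcongr; linarith
  refine le_trans ?_ h3
  have h4 : (1 + 1 / (ε * Real.log 2)) * (1 + e * (ε * Real.log 2)) =
     1 + e + e * (ε * Real.log 2) + 1 / (ε * Real.log 2) := by field_simp; ring
  rw [h4]
  have : 0 ≤ e * (ε * Real.log 2) + 1 / (ε * Real.log 2) := by positivity
  linarith

lemma aux_pow_bound_large (ε : ℝ) (hε : 0 < ε) (p e : ℕ) (hp : (2 : ℝ) ^ (1 / ε) ≤ p) :
    ((e : ℝ) + 1) ≤ ((p : ℝ) ^ e) ^ ε := by
  have h1 : (2 : ℝ) ≤ (p : ℝ) ^ ε := by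
    have := Real.rpow_le_rpow (by positivity) hp hε.le
    rwa [← Real.rpow_mul (by norm_num), one_div_mul_cancel hε.ne', Real.rpow_one] at this
  have h2 : ((p : ℝ) ^ e) ^ ε = ((p : ℝ) ^ ε) ^ e := by
    rw [← Real.rpow_natCast, ← Real.rpow_natCast, ← Real.rpow_mul (by positivity),
      ← Real.rpow_mul (by positivity), mul_comm]
  rw [h2]
  have h3 : (2 : ℝ) ^ e ≤ ((p : ℝ) ^ ε) ^ e := by gcongr
  refine le_trans ?_ h3
  have : e < 2 ^ e := Nat.lt_two_pow_self
  exact_mod_cast this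

lemma divisor_bound (ε : ℝ) (hε : 0 < ε) : ∃ C : ℝ, 0 < C ∧ ∀ n : ℕ, n ≠ 0 →
    (n.divisors.card : ℝ) ≤ C * (n : ℝ) ^ ε := by
  have hl : 0 < Real.log 2 := Real.log_pos (by norm_num)
  set K : ℝ := 1 + 1 / (ε * Real.log 2) with hK
  have hK1 : 1 ≤ K := by
    have : 0 ≤ 1 / (ε * Real.log 2) := by positivity
    linarith
  obtain ⟨P, hP⟩ := exists_nat_ge ((2 : ℝ) ^ (1 / ε))
  refine ⟨K ^ P, by positivity, fun n hn => ?_⟩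
  rw [Nat.card_divisors hn]
  have hn' : (n : ℝ) ^ ε = ∏ p ∈ n.primeFactors, (((p : ℝ) ^ (n.factorization p)) ^ ε) := by
    rw [Real.finsetProd_rpow _ _ (fun i _ => by positivity)]
    congr 1
    conv_lhs => rw [← Nat.prod_factorization_pow_eq_self hn]
    rw [Finsupp.prod]
    push_cast
    rfl
  have hb : ((∏ x ∈ n.primeFactors, (n.factorization x + 1) : ℕ) : ℝ) ≤
      ∏ p ∈ n.primeFactors, ((if p < P then K else 1) * (((p : ℝ) ^ (n.factorization p)) ^ ε)) := by
    push_cast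
    apply Finset.prod_le_prod
    · intros; positivity
    · intro p hp
      have hp2 := (Nat.prime_of_mem_primeFactors hp).two_le
      split_ifs with h
      · exact aux_pow_bound ε hε p _ hp2
      · rw [one_mul]
        apply aux_pow_bound_large ε hε
        push Not at h
        exact hP.trans (by exact_mod_cast h)
  refine hb.trans ?_
  rw [Finset.prod_mul_distrib, ← hn']
  apply mul_le_mul_of_nonneg_right _ (by positivity)
  rw [← Finset.prod_filter, Finset.prod_const]
  apply pow_le_pow_right₀ hK1
  calc _ ≤ (Finset.range P).card := Finset.card_le_card (by intro x; simp)
    _ = P := by simp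

open GaussianInt in
lemma gauss_finite (k : ℕ) : {z : GaussianInt | z.norm = k}.Finite := by
  have : ({z : GaussianInt | z.norm = k}) ⊆
    (fun q : ℤ × ℤ => (⟨q.1, q.2⟩ : GaussianInt)) ''
      ((Finset.Icc (-(k:ℤ)) k ×ˢ Finset.Icc (-(k:ℤ)) k : Finset (ℤ × ℤ)) : Set (ℤ × ℤ)) := by
    intro z hz
    simp only [Set.mem_ofPred_eq, Zsqrtd.norm_def] at hz
    refine ⟨(z.re, z.im), ?_, rfl⟩
    simp only [Finset.coe_product, Set.mem_prod, Finset.mem_coe, Finset.mem_Icc]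
    refine ⟨⟨?_, ?_⟩, ⟨?_, ?_⟩⟩ <;> nlinarith [sq_nonneg z.re, sq_nonneg z.im, sq_nonneg (z.re-1), sq_nonneg (z.re+1), sq_nonneg (z.im-1), sq_nonneg (z.im+1)]
  exact (Set.Finite.image _ (Finset.finite_toSet _)).subset this

noncomputable def gaussR (k : ℕ) : ℕ := {z : GaussianInt | z.norm = k}.ncard

lemma gaussR_mul (a b : ℕ) (hab : a.Coprime b) : gaussR (a * b) ≤ gaussR a * gaussR b := by
  unfold gaussR
  rw [← Set.ncard_prod]
  have hsub : {z : GaussianInt | z.norm = ((a * b : ℕ) : ℤ)} ⊆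
      (fun q : GaussianInt × GaussianInt => q.1 * q.2) ''
        ({z : GaussianInt | z.norm = a} ×ˢ {z : GaussianInt | z.norm = b}) := by
    intro z hz
    have hz : z.norm = ((a * b : ℕ) : ℤ) := hz
    have h1 : z ∣ (a : GaussianInt) * b := by
      refine ⟨star z, ?_⟩
      rw [← Zsqrtd.norm_eq_mul_conj, hz]
      push_cast; rfl
    obtain ⟨x, y, hx, hy, rfl⟩ := exists_dvd_and_dvd_of_dvd_mul h1
    refine ⟨(x, y), ?_, rfl⟩
    have hnx : x.norm.natAbs ∣ a * a := by
      obtain ⟨t, ht⟩ := hx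
      have : (a : GaussianInt).norm = x.norm * t.norm := by rw [ht, Zsqrtd.norm_mul]
      have h2 : (a : GaussianInt).norm = a * a := by simp [Zsqrtd.norm_natCast]
      have h3 : x.norm ∣ (a * a : ℕ) := ⟨t.norm, by push_cast; rw [← h2, this]⟩
      exact Int.natAbs_dvd_natAbs.mpr h3
    have hny : y.norm.natAbs ∣ b * b := by
      obtain ⟨t, ht⟩ := hy
      have : (b : GaussianInt).norm = y.norm * t.norm := by rw [ht, Zsqrtd.norm_mul]
      have h2 : (b : GaussianInt).norm = b * b := by simp [Zsqrtd.norm_natCast]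
      have h3 : y.norm ∣ (b * b : ℕ) := ⟨t.norm, by push_cast; rw [← h2, this]⟩
      exact Int.natAbs_dvd_natAbs.mpr h3
    have hxy : x.norm.natAbs * y.norm.natAbs = a * b := by
      rw [← Int.natAbs_mul, ← Zsqrtd.norm_mul, hz]; rfl
    have c1 : x.norm.natAbs.Coprime b :=
      Nat.Coprime.coprime_dvd_left hnx (Nat.Coprime.mul_left hab hab)
    have c2 : y.norm.natAbs.Coprime a :=
      Nat.Coprime.coprime_dvd_left hny (Nat.Coprime.mul_left hab.symm hab.symm)
    have d1 : x.norm.natAbs = a := by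
      apply Nat.dvd_antisymm
      · exact c1.dvd_of_dvd_mul_right (hxy ▸ Dvd.intro _ rfl)
      · exact c2.symm.dvd_of_dvd_mul_right (hxy ▸ Dvd.intro _ rfl)
    have d2 : y.norm.natAbs = b := by
      apply Nat.dvd_antisymm
      · exact c2.dvd_of_dvd_mul_left (hxy ▸ Dvd.intro_left _ rfl)
      · exact c1.symm.dvd_of_dvd_mul_left (hxy ▸ Dvd.intro_left _ rfl)
    refine ⟨?_, ?_⟩
    · show x.norm = a
      rw [← d1]; exact (GaussianInt.abs_natCast_norm x).symm
    · show y.norm = b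
      rw [← d2]; exact (GaussianInt.abs_natCast_norm y).symm
  have hfin := (gauss_finite a).prod (gauss_finite b)
  exact (Set.ncard_le_ncard hsub (hfin.image _)).trans (Set.ncard_image_le hfin)

lemma gauss_unit_finite : gaussR 1 ≤ 9 := by
  unfold gaussR
  have : ({z : GaussianInt | z.norm = (1 : ℕ)}) ⊆
    (fun q : ℤ × ℤ => (⟨q.1, q.2⟩ : GaussianInt)) ''
      ((Finset.Icc (-1:ℤ) 1 ×ˢ Finset.Icc (-1:ℤ) 1 : Finset (ℤ × ℤ)) : Set (ℤ × ℤ)) := by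
    intro z hz
    simp only [Set.mem_ofPred_eq, Zsqrtd.norm_def] at hz
    refine ⟨(z.re, z.im), ?_, rfl⟩
    simp only [Finset.coe_product, Set.mem_prod, Finset.mem_coe, Finset.mem_Icc]
    refine ⟨⟨?_, ?_⟩, ⟨?_, ?_⟩⟩ <;> push_cast at hz <;> nlinarith [sq_nonneg z.re, sq_nonneg z.im, sq_nonneg (z.re-1), sq_nonneg (z.re+1), sq_nonneg (z.im-1), sq_nonneg (z.im+1)]
  refine (Set.ncard_le_ncard this (Set.Finite.image _ (Finset.finite_toSet _))).trans ?_
  refine (Set.ncard_image_le (Finset.finite_toSet _)).trans ?_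
  rw [Set.ncard_coe_finset]
  decide

lemma gauss_form (p : ℕ) (hp : p.Prime) (π : GaussianInt) (hπ : Prime π) (hd : π ∣ (p : GaussianInt))
    (e : ℕ) : ∀ z : GaussianInt, z.norm = ((p ^ e : ℕ) : ℤ) →
      ∃ i j : ℕ, i ≤ e ∧ j ≤ e ∧ ∃ u : GaussianInt, u.norm = (1 : ℕ) ∧ z = u * π ^ i * (star π) ^ j := by
  induction e using Nat.strong_induction_on with
  | _ e ih =>
    intro z hz
    rcases Nat.eq_zero_or_pos e with rfl | he
    · exact ⟨0, 0, le_rfl, le_rfl, z, by simpa using hz, by simp⟩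
    · have hnπ : π.norm.natAbs ≠ 1 := fun h => hπ.not_isUnit (Zsqrtd.norm_eq_one_iff.mp h)
      have hdiv : π ∣ z ∨ star π ∣ z := by
        have : π ∣ z * star z := by
          rw [← Zsqrtd.norm_eq_mul_conj, hz]
          push_cast
          exact hd.trans (dvd_pow_self _ he.ne')
        rcases hπ.dvd_or_dvd this with h | h
        · exact Or.inl h
        · right
          obtain ⟨t, ht⟩ := h
          exact ⟨star t, by rw [← star_star z, ht, star_mul, mul_comm]⟩
      have key : ∀ ρ w : GaussianInt, ρ.norm = π.norm → z = ρ * w →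
          ∃ f, f < e ∧ w.norm = ((p ^ f : ℕ) : ℤ) := by
        intro ρ w hρ hw
        have h1 : ρ.norm * w.norm = ((p ^ e : ℕ) : ℤ) := by rw [← Zsqrtd.norm_mul, ← hw, hz]
        have h2 : π.norm.natAbs * w.norm.natAbs = p ^ e := by
          rw [← hρ, ← Int.natAbs_mul, h1]; rfl
        obtain ⟨f, hf, hf'⟩ := (Nat.dvd_prime_pow hp).mp (Dvd.intro_left _ h2)
        refine ⟨f, lt_of_le_of_ne hf ?_, ?_⟩
        · rintro rfl
          rw [hf'] at h2
          exact hnπ (Nat.eq_of_mul_eq_mul_right (pow_pos hp.pos f) (by rw [h2, one_mul]))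
        · rw [← hf']; exact (GaussianInt.abs_natCast_norm w).symm
      rcases hdiv with ⟨w, hw⟩ | ⟨w, hw⟩
      · obtain ⟨f, hf, hwf⟩ := key π w rfl hw
        obtain ⟨i, j, hi, hj, u, hu, hz'⟩ := ih f hf w hwf
        exact ⟨i + 1, j, by omega, by omega, u, hu, by rw [hw, hz']; ring⟩
      · obtain ⟨f, hf, hwf⟩ := key (star π) w (Zsqrtd.norm_conj π) hw
        obtain ⟨i, j, hi, hj, u, hu, hz'⟩ := ih f hf w hwf
        exact ⟨i, j + 1, by omega, by omega, u, hu, by rw [hw, hz']; ring⟩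

lemma gaussR_prime_pow (p e : ℕ) (hp : p.Prime) : gaussR (p ^ e) ≤ 9 * (e + 1) ^ 2 := by
  have hnu : ¬ IsUnit (p : GaussianInt) := by
    intro h
    have := Zsqrtd.norm_eq_one_iff.mpr h
    simp only [Zsqrtd.norm_natCast, Int.natAbs_mul, Int.natAbs_natCast] at this
    have := hp.two_le
    nlinarith
  have h0 : (p : GaussianInt) ≠ 0 := by exact_mod_cast hp.ne_zero
  obtain ⟨π, hπ, hd⟩ := WfDvdMonoid.exists_irreducible_factor hnu h0
  have hπ := hπ.prime
  have hsub : {z : GaussianInt | z.norm = ((p ^ e : ℕ) : ℤ)} ⊆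
      (fun q : GaussianInt × (ℕ × ℕ) => q.1 * π ^ q.2.1 * (star π) ^ q.2.2) ''
        ({z : GaussianInt | z.norm = (1 : ℕ)} ×ˢ
          ((Finset.range (e + 1) ×ˢ Finset.range (e + 1) : Finset (ℕ × ℕ)) : Set (ℕ × ℕ))) := by
    intro z hz
    obtain ⟨i, j, hi, hj, u, hu, h⟩ := gauss_form p hp π hπ hd e z hz
    refine ⟨(u, (i, j)), ⟨hu, ?_⟩, h.symm⟩
    simp; omega
  have hfin := (gauss_finite 1).prod
    (Finset.finite_toSet (Finset.range (e + 1) ×ˢ Finset.range (e + 1)))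
  refine ((Set.ncard_le_ncard hsub (hfin.image _)).trans (Set.ncard_image_le hfin)).trans ?_
  rw [Set.ncard_prod, Set.ncard_coe_finset, Finset.card_product, Finset.card_range, ← sq]
  exact Nat.mul_le_mul_right _ gauss_unit_finite

lemma gaussR_le (k : ℕ) (hk : k ≠ 0) : gaussR k ≤ 9 * k.divisors.card ^ 6 := by
  have key : k ≠ 0 → k ≠ 1 → gaussR k ≤ k.divisors.card ^ 6 := by
    induction k using Nat.recOnPosPrimePosCoprime with
    | zero => intro h; exact absurd rfl h
    | one => intro _ h; exact absurd rfl h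
    | prime_pow p n hp hn =>
      intro _ _
      rw [Nat.divisors_prime_pow hp]
      simp only [Finset.card_map, Finset.card_range]
      refine (gaussR_prime_pow p n hp).trans ?_
      have : 16 ≤ (n + 1) ^ 4 := by
        have : 2 ^ 4 ≤ (n + 1) ^ 4 := by gcongr; omega
        simpa using this
      nlinarith [sq_nonneg (n + 1)]
    | coprime a b ha hb hab iha ihb =>
      intro _ _
      have := iha (by omega) (by omega) (by omega)
      have := ihb (by omega) (by omega) (by omega)
      rw [hab.card_divisors_mul, mul_pow]
      exact (gaussR_mul a b hab).trans (by gcongr)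
  by_cases h1 : k = 1
  · subst h1; simpa using gauss_unit_finite
  · linarith [key hk h1, Nat.zero_le (k.divisors.card ^ 6)]

lemma gauss_count (s : Finset (ℤ × ℤ)) (k : ℕ) (hk : k ≠ 0) (h : ∀ w ∈ s, nsq w = k) :
    s.card ≤ 9 * k.divisors.card ^ 6 := by
  refine le_trans ?_ (gaussR_le k hk)
  unfold gaussR
  rw [← Set.ncard_coe_finset]
  refine Set.ncard_le_ncard_of_injOn (fun q : ℤ × ℤ => (⟨q.1, q.2⟩ : GaussianInt)) ?_ ?_ (gauss_finite k)
  · intro w hw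
    have := h w hw
    simp only [Set.mem_ofPred_eq, Zsqrtd.norm_def]
    rw [← this, nsq]; ring
  · intro a _ b _ hab
    simp only [Zsqrtd.mk.injEq] at hab
    exact Prod.ext hab.1 hab.2

lemma circle_id (x1 y1 x2 y2 x3 y3 k : ℤ) (h1 : x1 ^ 2 + y1 ^ 2 = k) (h2 : x2 ^ 2 + y2 ^ 2 = k)
    (h3 : x3 ^ 2 + y3 ^ 2 = k) :
    4 * k * ((x2 - x1) * (y3 - y1) - (x3 - x1) * (y2 - y1)) ^ 2 =
      ((x1 - x2) ^ 2 + (y1 - y2) ^ 2) * ((x2 - x3) ^ 2 + (y2 - y3) ^ 2) *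
        ((x1 - x3) ^ 2 + (y1 - y3) ^ 2) := by
  obtain ⟨a, ha⟩ : ∃ a, a = x1 * x2 + y1 * y2 := ⟨_, rfl⟩
  obtain ⟨b, hb⟩ : ∃ b, b = x2 * x3 + y2 * y3 := ⟨_, rfl⟩
  obtain ⟨c, hc⟩ : ∃ c, c = x1 * x3 + y1 * y3 := ⟨_, rfl⟩
  have e1 : (x1 - x2) ^ 2 + (y1 - y2) ^ 2 = 2 * k - 2 * a := by
    linear_combination h1 + h2 + 2 * ha
  have e2 : (x2 - x3) ^ 2 + (y2 - y3) ^ 2 = 2 * k - 2 * b := by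
    linear_combination h2 + h3 + 2 * hb
  have e3 : (x1 - x3) ^ 2 + (y1 - y3) ^ 2 = 2 * k - 2 * c := by
    linear_combination h1 + h3 + 2 * hc
  have e4 : (x2 - x1) * (x3 - x1) + (y2 - y1) * (y3 - y1) = b - a - c + k := by
    linear_combination h1 - hb + ha + hc
  have e5 : ((x2 - x1) * (y3 - y1) - (x3 - x1) * (y2 - y1)) ^ 2 =
      (2 * k - 2 * a) * (2 * k - 2 * c) - (b - a - c + k) ^ 2 := by
    rw [← e1, ← e3, ← e4]; ring
  have g : k ^ 3 + 2 * a * b * c - k * (a ^ 2 + b ^ 2 + c ^ 2) = 0 := by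
    have : (x1 ^ 2 + y1 ^ 2) * (x2 ^ 2 + y2 ^ 2) * (x3 ^ 2 + y3 ^ 2) + 2 * a * b * c
      - ((x3 ^ 2 + y3 ^ 2) * a ^ 2 + (x1 ^ 2 + y1 ^ 2) * b ^ 2 + (x2 ^ 2 + y2 ^ 2) * c ^ 2) = 0 := by
      rw [ha, hb, hc]; ring
    rw [h1, h2, h3] at this
    linear_combination this
  rw [e5, e1, e2, e3]
  linear_combination 4 * g

lemma dist_sq_pos (a b : ℤ × ℤ) (h : a ≠ b) : 0 < (a.1 - b.1) ^ 2 + (a.2 - b.2) ^ 2 := by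
  by_contra hc
  apply h
  have h1 : a.1 - b.1 = 0 := by nlinarith [sq_nonneg (a.1 - b.1), sq_nonneg (a.2 - b.2)]
  have h2 : a.2 - b.2 = 0 := by nlinarith [sq_nonneg (a.1 - b.1), sq_nonneg (a.2 - b.2)]
  exact Prod.ext (by omega) (by omega)

lemma circle_small (s : Finset (ℤ × ℤ)) (k : ℤ) (M : ℕ) (h : ∀ w ∈ s, nsq w = k)
    (hM : ∀ w ∈ s, ∀ w' ∈ s, |w.1 - w'.1| ≤ M ∧ |w.2 - w'.2| ≤ M) (hs : 2 < s.card) :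
    0 < k ∧ k ≤ 2 * M ^ 6 := by
  obtain ⟨a, ha, b, hb, c, hc, hab, hac, hbc⟩ := Finset.two_lt_card.mp hs
  have id := circle_id a.1 a.2 b.1 b.2 c.1 c.2 k (h a ha) (h b hb) (h c hc)
  have p1 := dist_sq_pos a b hab
  have p2 := dist_sq_pos b c hbc
  have p3 := dist_sq_pos a c hac
  have bd : ∀ w ∈ s, ∀ w' ∈ s, (w.1 - w'.1) ^ 2 + (w.2 - w'.2) ^ 2 ≤ 2 * (M : ℤ) ^ 2 := by
    intro w hw w' hw'
    obtain ⟨h1, h2⟩ := hM w hw w' hw'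
    have := sq_le_sq' (by linarith [neg_abs_le (w.1 - w'.1)]) ((le_abs_self (w.1 - w'.1)).trans h1)
    have := sq_le_sq' (by linarith [neg_abs_le (w.2 - w'.2)]) ((le_abs_self (w.2 - w'.2)).trans h2)
    linarith
  have b1 := bd a ha b hb
  have b2 := bd b hb c hc
  have b3 := bd a ha c hc
  set D := (b.1 - a.1) * (c.2 - a.2) - (c.1 - a.1) * (b.2 - a.2)
  have pos := mul_pos (mul_pos p1 p2) p3
  rw [← id] at pos
  have hk0 : 0 ≤ k := by rw [← h a ha, nsq]; positivity
  have hk : 0 < k := by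
    rcases hk0.lt_or_eq with h | h
    · exact h
    · rw [← h] at pos; simp at pos
  have hD : 1 ≤ D ^ 2 := by
    rcases (sq_nonneg D).lt_or_eq with h | h
    · exact h
    · rw [← h] at pos; simp at pos
  have up : 4 * k * D ^ 2 ≤ (2 * (M : ℤ) ^ 2) * (2 * (M : ℤ) ^ 2) * (2 * (M : ℤ) ^ 2) := by
    rw [id]; gcongr
  refine ⟨hk, ?_⟩
  have up2 : 4 * k * 1 ≤ 4 * k * D ^ 2 := mul_le_mul_of_nonneg_left hD (by linarith)
  have up3 : (2 * (M : ℤ) ^ 2) * (2 * (M : ℤ) ^ 2) * (2 * (M : ℤ) ^ 2) = 8 * (M : ℤ) ^ 6 := by ring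
  linarith

lemma circle_lemma (ε : ℝ) (hε : 0 < ε) : ∃ C : ℝ, 0 < C ∧ ∀ (M : ℕ) (s : Finset (ℤ × ℤ)) (k : ℤ),
    1 ≤ M → (∀ w ∈ s, nsq w = k) →
    (∀ w ∈ s, ∀ w' ∈ s, |w.1 - w'.1| ≤ M ∧ |w.2 - w'.2| ≤ M) →
    (s.card : ℝ) ≤ C * (M : ℝ) ^ ε := by
  obtain ⟨C, hC, hdiv⟩ := divisor_bound (ε / 36) (by positivity)
  refine ⟨2 + 9 * C ^ 6 * 2 ^ (ε / 6), by positivity, fun M s k hM1 h hM => ?_⟩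
  have hM1' : (1 : ℝ) ≤ M := by exact_mod_cast hM1
  have hMe : 1 ≤ (M : ℝ) ^ ε := Real.one_le_rpow hM1' hε.le
  have hpos : 0 ≤ 9 * C ^ 6 * (2 : ℝ) ^ (ε / 6) := by positivity
  by_cases hs : 2 < s.card
  · obtain ⟨hk, hkM⟩ := circle_small s k M h hM hs
    lift k to ℕ using hk.le
    have hk0 : k ≠ 0 := by omega
    have h1 : (s.card : ℝ) ≤ 9 * (k.divisors.card : ℝ) ^ 6 := by
      exact_mod_cast gauss_count s k hk0 h
    have h2 := hdiv k hk0
    have h3 : (k : ℝ) ≤ 2 * (M : ℝ) ^ 6 := by exact_mod_cast hkM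
    have h4 : ((k : ℝ) ^ (ε / 36)) ^ 6 ≤ 2 ^ (ε / 6) * (M : ℝ) ^ ε := by
      calc ((k : ℝ) ^ (ε / 36)) ^ 6 = (k : ℝ) ^ (ε / 6) := by
            rw [← Real.rpow_natCast, ← Real.rpow_mul (by positivity)]; congr 1; push_cast; ring
        _ ≤ (2 * (M : ℝ) ^ 6) ^ (ε / 6) := Real.rpow_le_rpow (by positivity) h3 (by positivity)
        _ = 2 ^ (ε / 6) * (M : ℝ) ^ ε := by
            rw [Real.mul_rpow (by positivity) (by positivity), ← Real.rpow_natCast,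
              ← Real.rpow_mul (by positivity)]
            congr 2; push_cast; ring
    calc (s.card : ℝ) ≤ 9 * (k.divisors.card : ℝ) ^ 6 := h1
      _ ≤ 9 * (C * (k : ℝ) ^ (ε / 36)) ^ 6 := by gcongr
      _ = 9 * C ^ 6 * ((k : ℝ) ^ (ε / 36)) ^ 6 := by ring
      _ ≤ 9 * C ^ 6 * (2 ^ (ε / 6) * (M : ℝ) ^ ε) := by gcongr
      _ ≤ _ := by nlinarith
  · have : (s.card : ℝ) ≤ 2 := by exact_mod_cast not_lt.mp hs
    nlinarith

lemma hyp_count (s : Finset (ℤ × ℤ)) (k : ℤ) (hk : k ≠ 0) (h : ∀ w ∈ s, w.1 * w.2 = k) :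
    s.card ≤ 2 * k.natAbs.divisors.card := by
  classical
  let T : Finset ℤ := k.natAbs.divisors.image (fun d : ℕ => (d : ℤ)) ∪
    k.natAbs.divisors.image (fun d : ℕ => -(d : ℤ))
  have hT : T.card ≤ 2 * k.natAbs.divisors.card := by
    refine (Finset.card_union_le _ _).trans ?_
    rw [two_mul]
    exact add_le_add Finset.card_image_le Finset.card_image_le
  refine le_trans (Finset.card_le_card_of_injOn Prod.fst ?_ ?_) hT
  · intro w hw
    have hw' := h w hw
    have hd : w.1.natAbs ∈ k.natAbs.divisors := by
      rw [Nat.mem_divisors]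
      exact ⟨Int.natAbs_dvd_natAbs.mpr ⟨_, hw'.symm⟩, by simpa using hk⟩
    simp only [T, Finset.coe_union, Set.mem_union, Finset.mem_coe, Finset.mem_image]
    rcases Int.natAbs_eq w.1 with h | h
    · exact Or.inl ⟨_, hd, h.symm⟩
    · exact Or.inr ⟨_, hd, h.symm⟩
  · intro a ha b hb hab
    have h1 := h a ha
    have h2 := h b hb
    have hab : a.1 = b.1 := hab
    refine Prod.ext hab ?_
    have : a.1 ≠ 0 := by rintro h0; rw [h0] at h1; simp at h1; exact hk h1.symm
    rw [← hab, ← h1] at h2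
    exact (mul_left_cancel₀ this h2).symm

lemma hyp_aux (k : ℤ) (hk : k ≠ 0) (A : ℕ) (u1 v1 u2 v2 u3 v3 : ℤ)
    (h1 : u1 * v1 = k) (h2 : u2 * v2 = k) (h3 : u3 * v3 = k) (d12 : u1 ≠ u2) (d23 : u2 ≠ u3)
    (d31 : u3 ≠ u1) (b12 : |u1 - u2| ≤ A) (b23 : |u2 - u3| ≤ A) (b31 : |u3 - u1| ≤ A) :
    |u1 * u2 * u3| ≤ |k| * A ^ 3 := by
  set D := u1 * (v2 - v3) + u2 * (v3 - v1) + u3 * (v1 - v2)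
  have id : D * (u1 * u2 * u3) = k * ((u1 - u2) * (u2 - u3) * (u3 - u1)) * (-1) ∨
      D * (u1 * u2 * u3) = k * ((u1 - u2) * (u2 - u3) * (u3 - u1)) := by
    first
    | left
      simp only [D]
      linear_combination (u2 * u3 ^ 2 - u2 ^ 2 * u3) * h1 + (u1 ^ 2 * u3 - u1 * u3 ^ 2) * h2 + (u1 * u2 ^ 2 - u1 ^ 2 * u2) * h3
    | right
      simp only [D]
      linear_combination (u2 * u3 ^ 2 - u2 ^ 2 * u3) * h1 + (u1 ^ 2 * u3 - u1 * u3 ^ 2) * h2 + (u1 * u2 ^ 2 - u1 ^ 2 * u2) * h3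
  have habs : |D| * |u1 * u2 * u3| = |k| * (|u1 - u2| * |u2 - u3| * |u3 - u1|) := by
    rw [← abs_mul, ← abs_mul, ← abs_mul, ← abs_mul]
    rcases id with h | h <;> rw [h] <;> simp
  have pos : 0 < |k| * (|u1 - u2| * |u2 - u3| * |u3 - u1|) := by
    have := abs_pos.mpr hk
    have := abs_pos.mpr (sub_ne_zero.mpr d12)
    have := abs_pos.mpr (sub_ne_zero.mpr d23)
    have := abs_pos.mpr (sub_ne_zero.mpr d31)
    positivity
  have hD : 1 ≤ |D| := by
    rcases (abs_nonneg D).lt_or_eq with h | h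
    · exact h
    · rw [← habs, ← h] at pos; simp at pos
  calc |u1 * u2 * u3| ≤ |D| * |u1 * u2 * u3| := by nlinarith [abs_nonneg (u1 * u2 * u3)]
    _ = _ := habs
    _ ≤ |k| * ((A : ℤ) * A * A) := by gcongr
    _ = _ := by ring

lemma hyp_small (s : Finset (ℤ × ℤ)) (k : ℤ) (hk : k ≠ 0) (A B : ℕ) (h : ∀ w ∈ s, w.1 * w.2 = k)
    (hM : ∀ w ∈ s, ∀ w' ∈ s, |w.1 - w'.1| ≤ A ∧ |w.2 - w'.2| ≤ B) (hs : 2 < s.card) :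
    k.natAbs ≤ (A * B) ^ 3 := by
  obtain ⟨a, ha, b, hb, c, hc, hab, hac, hbc⟩ := Finset.two_lt_card.mp hs
  have inj1 : ∀ w ∈ s, ∀ w' ∈ s, w ≠ w' → w.1 ≠ w'.1 := by
    intro w hw w' hw' hne he
    apply hne
    have h1 := h w hw
    have h2 := h w' hw'
    refine Prod.ext he ?_
    have : w.1 ≠ 0 := by rintro h0; rw [h0] at h1; simp at h1; exact hk h1.symm
    rw [← he, ← h1] at h2
    exact (mul_left_cancel₀ this h2).symm
  have inj2 : ∀ w ∈ s, ∀ w' ∈ s, w ≠ w' → w.2 ≠ w'.2 := by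
    intro w hw w' hw' hne he
    apply hne
    have h1 := h w hw
    have h2 := h w' hw'
    refine Prod.ext ?_ he
    have : w.2 ≠ 0 := by rintro h0; rw [h0] at h1; simp at h1; exact hk h1.symm
    rw [← he, ← h1] at h2
    exact (mul_right_cancel₀ this h2).symm
  have e1 := hyp_aux k hk A a.1 a.2 b.1 b.2 c.1 c.2 (h a ha) (h b hb) (h c hc)
    (inj1 a ha b hb hab) (inj1 b hb c hc hbc) (inj1 c hc a ha hac.symm)
    (hM a ha b hb).1 (hM b hb c hc).1 (hM c hc a ha).1
  have e2 := hyp_aux k hk B a.2 a.1 b.2 b.1 c.2 c.1 (by rw [mul_comm]; exact h a ha)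
    (by rw [mul_comm]; exact h b hb) (by rw [mul_comm]; exact h c hc)
    (inj2 a ha b hb hab) (inj2 b hb c hc hbc) (inj2 c hc a ha hac.symm)
    (hM a ha b hb).2 (hM b hb c hc).2 (hM c hc a ha).2
  have e3 : |k| ^ 3 = |a.1 * b.1 * c.1| * |a.2 * b.2 * c.2| := by
    rw [← abs_mul, ← abs_pow]
    congr 1
    calc k ^ 3 = k * k * k := by ring
      _ = (a.1 * a.2) * (b.1 * b.2) * (c.1 * c.2) := by rw [h a ha, h b hb, h c hc]
      _ = _ := by ring
  have hkp := abs_pos.mpr hk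
  have e4 : |k| ^ 2 * |k| ≤ |k| ^ 2 * ((A : ℤ) * B) ^ 3 := by
    calc |k| ^ 2 * |k| = |k| ^ 3 := by ring
      _ ≤ (|k| * A ^ 3) * (|k| * B ^ 3) := by rw [e3]; gcongr
      _ = _ := by ring
  have e5 : |k| ≤ ((A : ℤ) * B) ^ 3 := le_of_mul_le_mul_left e4 (by positivity)
  rw [Int.abs_eq_natAbs] at e5
  exact_mod_cast e5

lemma hyp_lemma (ε : ℝ) (hε : 0 < ε) : ∃ C : ℝ, 0 < C ∧ ∀ (A B : ℕ) (s : Finset (ℤ × ℤ)) (k : ℤ),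
    1 ≤ A → 1 ≤ B → k ≠ 0 → (∀ w ∈ s, w.1 * w.2 = k) →
    (∀ w ∈ s, ∀ w' ∈ s, |w.1 - w'.1| ≤ A ∧ |w.2 - w'.2| ≤ B) →
    (s.card : ℝ) ≤ C * ((A : ℝ) * B) ^ ε := by
  obtain ⟨C, hC, hdiv⟩ := divisor_bound (ε / 3) (by positivity)
  refine ⟨2 + 2 * C, by positivity, fun A B s k hA hB hk h hM => ?_⟩
  have hM1' : (1 : ℝ) ≤ (A : ℝ) * B := by exact_mod_cast Nat.mul_pos hA hB
  have hMe : 1 ≤ ((A : ℝ) * B) ^ ε := Real.one_le_rpow hM1' hε.le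
  by_cases hs : 2 < s.card
  · have hkM := hyp_small s k hk A B h hM hs
    have h1 : (s.card : ℝ) ≤ 2 * (k.natAbs.divisors.card : ℝ) := by
      exact_mod_cast hyp_count s k hk h
    have h2 := hdiv k.natAbs (by simpa using hk)
    have h3 : (k.natAbs : ℝ) ≤ ((A : ℝ) * B) ^ 3 := by exact_mod_cast hkM
    have h4 : (k.natAbs : ℝ) ^ (ε / 3) ≤ ((A : ℝ) * B) ^ ε := by
      calc (k.natAbs : ℝ) ^ (ε / 3) ≤ (((A : ℝ) * B) ^ 3) ^ (ε / 3) :=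
            Real.rpow_le_rpow (by positivity) h3 (by positivity)
        _ = _ := by
            rw [← Real.rpow_natCast, ← Real.rpow_mul (by positivity)]
            congr 1; push_cast; ring
    calc (s.card : ℝ) ≤ 2 * (k.natAbs.divisors.card : ℝ) := h1
      _ ≤ 2 * (C * (k.natAbs : ℝ) ^ (ε / 3)) := by gcongr
      _ ≤ 2 * (C * ((A : ℝ) * B) ^ ε) := by gcongr
      _ ≤ _ := by nlinarith
  · have : (s.card : ℝ) ≤ 2 := by exact_mod_cast not_lt.mp hs
    nlinarith

/-- fibre counting, real version -/
lemma card_fiber_real {α β : Type*} [DecidableEq β] (s : Finset α) (t : Finset β) (f : α → β)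
    (hf : ∀ a ∈ s, f a ∈ t) (K : ℝ) (hK : ∀ b ∈ t, ((s.filter (fun a => f a = b)).card : ℝ) ≤ K) :
    (s.card : ℝ) ≤ K * t.card := by
  rw [Finset.card_eq_sum_card_fiberwise (f := f) (t := t) hf]
  push_cast
  calc _ ≤ ∑ b ∈ t, K := Finset.sum_le_sum hK
    _ = _ := by simp [mul_comm]

/-- integer interval of radius `A` about `c` -/
noncomputable def ibox (c : ℤ) (A : ℕ) : Finset ℤ := Finset.Icc (c - A) (c + A)

lemma mem_ibox {c x : ℤ} {A : ℕ} : x ∈ ibox c A ↔ c - A ≤ x ∧ x ≤ c + A := by simp [ibox]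

lemma ibox_sub {c x y : ℤ} {A : ℕ} (hx : x ∈ ibox c A) (hy : y ∈ ibox c A) :
    |x - y| ≤ ((2 * A : ℕ) : ℤ) := by
  rw [mem_ibox] at hx hy
  rw [abs_le]; push_cast; omega

lemma ibox_card (c : ℤ) (A : ℕ) (hA : 1 ≤ A) : (ibox c A).card ≤ 3 * A := by
  simp [ibox]; omega

lemma ibox_prod_card (c d : ℤ) (A B : ℕ) (hA : 1 ≤ A) (hB : 1 ≤ B) :
    ((ibox c A ×ˢ ibox d B).card : ℝ) ≤ 9 * ((A : ℝ) * B) := by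
  rw [Finset.card_product]
  have := Nat.mul_le_mul (ibox_card c A hA) (ibox_card d B hB)
  have h2 : (((ibox c A).card * (ibox d B).card : ℕ) : ℝ) ≤ ((3 * A * (3 * B) : ℕ) : ℝ) := by
    exact_mod_cast this
  refine h2.trans (le_of_eq ?_)
  push_cast; ring

lemma dot_lemma (ε : ℝ) (hε : 0 < ε) : ∃ C : ℝ, 0 < C ∧
    ∀ (A B : ℕ) (c : ℤ × ℤ) (s : Finset ((ℤ × ℤ) × (ℤ × ℤ))) (μ : ℤ), 1 ≤ A → 1 ≤ B →
    (∀ q ∈ s, q.1.1 ∈ ibox c.1 A ∧ q.1.2 ∈ ibox c.2 A ∧ q.2.1 ∈ ibox c.1 B ∧ q.2.2 ∈ ibox c.2 B ∧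
      q.1 ≠ 0 ∧ q.2 ≠ 0 ∧ q.1.1 * q.2.1 + q.1.2 * q.2.2 = μ) →
    (s.card : ℝ) ≤ C * ((A : ℝ) * B) ^ (1 + ε) := by
  classical
  obtain ⟨C, hC, hyp⟩ := hyp_lemma ε hε
  refine ⟨18 * (C * 4 ^ ε) + 18, by positivity, fun A B c s μ hA hB hs => ?_⟩
  have hM1' : (1 : ℝ) ≤ (A : ℝ) * B := by exact_mod_cast Nat.mul_pos hA hB
  have hMe : 1 ≤ ((A : ℝ) * B) ^ ε := Real.one_le_rpow hM1' hε.le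
  have hK : C * (((2 * A : ℕ) : ℝ) * ((2 * B : ℕ) : ℝ)) ^ ε = C * 4 ^ ε * ((A : ℝ) * B) ^ ε := by
    rw [mul_assoc, ← Real.mul_rpow (by positivity) (by positivity)]
    congr 2; push_cast; ring
  set s1 := s.filter (fun q => q.1.2 * q.2.2 ≠ 0) with hs1
  set s2 := s.filter (fun q => q.1.1 * q.2.1 ≠ 0) with hs2
  set s3 := s.filter (fun q => q.1.1 = 0 ∧ q.2.2 = 0) with hs3
  set s4 := s.filter (fun q => q.2.1 = 0 ∧ q.1.2 = 0) with hs4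
  have hcover : s ⊆ (s1 ∪ s2) ∪ (s3 ∪ s4) := by
    intro q hq
    obtain ⟨-, -, -, -, n1, n2, -⟩ := hs q hq
    have n1' : ¬ (q.1.1 = 0 ∧ q.1.2 = 0) := fun h => n1 (Prod.ext h.1 h.2)
    have n2' : ¬ (q.2.1 = 0 ∧ q.2.2 = 0) := fun h => n2 (Prod.ext h.1 h.2)
    simp only [hs1, hs2, hs3, hs4, Finset.mem_union, Finset.mem_filter, hq, true_and, ne_eq, mul_eq_zero]
    tauto
  have c1 : (s1.card : ℝ) ≤ C * 4 ^ ε * ((A : ℝ) * B) ^ ε * (9 * ((A : ℝ) * B)) := by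
    refine (card_fiber_real s1 (ibox c.1 A ×ˢ ibox c.1 B) (fun q => (q.1.1, q.2.1)) ?_
      (C * 4 ^ ε * ((A : ℝ) * B) ^ ε) ?_).trans ?_
    · intro q hq
      have := hs q (Finset.mem_filter.mp hq).1
      exact Finset.mem_product.mpr ⟨this.1, this.2.2.1⟩
    · intro b _
      set F := s1.filter (fun a => (a.1.1, a.2.1) = b) with hF
      have hFm : ∀ q ∈ F, q ∈ s ∧ q.1.2 * q.2.2 ≠ 0 ∧ q.1.1 = b.1 ∧ q.2.1 = b.2 := by
        intro q hq
        obtain ⟨h1, h2⟩ := Finset.mem_filter.mp hq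
        obtain ⟨h3, h4⟩ := Finset.mem_filter.mp h1
        exact ⟨h3, h4, (Prod.ext_iff.mp h2).1, (Prod.ext_iff.mp h2).2⟩
      have hcard : F.card = (F.image (fun q => (q.1.2, q.2.2))).card := by
        refine (Finset.card_image_of_injOn ?_).symm
        intro q hq q' hq' he
        obtain ⟨-, -, x1, x2⟩ := hFm q hq
        obtain ⟨-, -, y1, y2⟩ := hFm q' hq'
        simp only [Prod.mk.injEq] at he
        exact Prod.ext (Prod.ext (x1.trans y1.symm) he.1) (Prod.ext (x2.trans y2.symm) he.2)
      by_cases hne : μ - b.1 * b.2 = 0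
      · have : F = ∅ := by
          apply Finset.eq_empty_of_forall_notMem
          intro q hq
          obtain ⟨x0, x1, x2, x3⟩ := hFm q hq
          have := (hs q x0).2.2.2.2.2.2
          rw [x2, x3] at this
          exact x1 (by linarith)
        rw [this]; simp; positivity
      · rw [hcard, ← hK]
        refine hyp (2 * A) (2 * B) _ (μ - b.1 * b.2) (by omega) (by omega) hne ?_ ?_
        · intro w hw
          obtain ⟨q, hq, rfl⟩ := Finset.mem_image.mp hw
          obtain ⟨x0, x1, x2, x3⟩ := hFm q hq
          have := (hs q x0).2.2.2.2.2.2
          rw [x2, x3] at this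
          simp only; linarith
        · intro w hw w' hw'
          obtain ⟨q, hq, rfl⟩ := Finset.mem_image.mp hw
          obtain ⟨q', hq', rfl⟩ := Finset.mem_image.mp hw'
          have x := hs q (hFm q hq).1
          have y := hs q' (hFm q' hq').1
          exact ⟨ibox_sub x.2.1 y.2.1, ibox_sub x.2.2.2.1 y.2.2.2.1⟩
    · gcongr
      exact ibox_prod_card _ _ _ _ hA hB
  have c2 : (s2.card : ℝ) ≤ C * 4 ^ ε * ((A : ℝ) * B) ^ ε * (9 * ((A : ℝ) * B)) := by
    refine (card_fiber_real s2 (ibox c.2 A ×ˢ ibox c.2 B) (fun q => (q.1.2, q.2.2)) ?_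
      (C * 4 ^ ε * ((A : ℝ) * B) ^ ε) ?_).trans ?_
    · intro q hq
      have := hs q (Finset.mem_filter.mp hq).1
      exact Finset.mem_product.mpr ⟨this.2.1, this.2.2.2.1⟩
    · intro b _
      set F := s2.filter (fun a => (a.1.2, a.2.2) = b) with hF
      have hFm : ∀ q ∈ F, q ∈ s ∧ q.1.1 * q.2.1 ≠ 0 ∧ q.1.2 = b.1 ∧ q.2.2 = b.2 := by
        intro q hq
        obtain ⟨h1, h2⟩ := Finset.mem_filter.mp hq
        obtain ⟨h3, h4⟩ := Finset.mem_filter.mp h1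
        exact ⟨h3, h4, (Prod.ext_iff.mp h2).1, (Prod.ext_iff.mp h2).2⟩
      have hcard : F.card = (F.image (fun q => (q.1.1, q.2.1))).card := by
        refine (Finset.card_image_of_injOn ?_).symm
        intro q hq q' hq' he
        obtain ⟨-, -, x1, x2⟩ := hFm q hq
        obtain ⟨-, -, y1, y2⟩ := hFm q' hq'
        simp only [Prod.mk.injEq] at he
        exact Prod.ext (Prod.ext he.1 (x1.trans y1.symm)) (Prod.ext he.2 (x2.trans y2.symm))
      by_cases hne : μ - b.1 * b.2 = 0
      · have : F = ∅ := by
          apply Finset.eq_empty_of_forall_notMem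
          intro q hq
          obtain ⟨x0, x1, x2, x3⟩ := hFm q hq
          have := (hs q x0).2.2.2.2.2.2
          rw [x2, x3] at this
          exact x1 (by linarith)
        rw [this]; simp; positivity
      · rw [hcard, ← hK]
        refine hyp (2 * A) (2 * B) _ (μ - b.1 * b.2) (by omega) (by omega) hne ?_ ?_
        · intro w hw
          obtain ⟨q, hq, rfl⟩ := Finset.mem_image.mp hw
          obtain ⟨x0, x1, x2, x3⟩ := hFm q hq
          have := (hs q x0).2.2.2.2.2.2
          rw [x2, x3] at this
          simp only; linarith
        · intro w hw w' hw'
          obtain ⟨q, hq, rfl⟩ := Finset.mem_image.mp hw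
          obtain ⟨q', hq', rfl⟩ := Finset.mem_image.mp hw'
          have x := hs q (hFm q hq).1
          have y := hs q' (hFm q' hq').1
          exact ⟨ibox_sub x.1 y.1, ibox_sub x.2.2.1 y.2.2.1⟩
    · gcongr
      exact ibox_prod_card _ _ _ _ hA hB
  have c3 : (s3.card : ℝ) ≤ 9 * ((A : ℝ) * B) := by
    refine le_trans ?_ (ibox_prod_card c.2 c.1 A B hA hB)
    norm_cast
    refine Finset.card_le_card_of_injOn (fun q => (q.1.2, q.2.1)) ?_ ?_
    · intro q hq
      have := hs q (Finset.mem_filter.mp hq).1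
      exact Finset.mem_coe.mpr (Finset.mem_product.mpr ⟨this.2.1, this.2.2.1⟩)
    · intro q hq q' hq' he
      obtain ⟨-, x1, x2⟩ := Finset.mem_filter.mp hq
      obtain ⟨-, y1, y2⟩ := Finset.mem_filter.mp hq'
      simp only [Prod.mk.injEq] at he
      exact Prod.ext (Prod.ext (x1.trans y1.symm) he.1) (Prod.ext he.2 (x2.trans y2.symm))
  have c4 : (s4.card : ℝ) ≤ 9 * ((A : ℝ) * B) := by
    refine le_trans ?_ (ibox_prod_card c.1 c.2 A B hA hB)
    norm_cast
    refine Finset.card_le_card_of_injOn (fun q => (q.1.1, q.2.2)) ?_ ?_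
    · intro q hq
      have := hs q (Finset.mem_filter.mp hq).1
      exact Finset.mem_coe.mpr (Finset.mem_product.mpr ⟨this.1, this.2.2.2.1⟩)
    · intro q hq q' hq' he
      obtain ⟨-, x1, x2⟩ := Finset.mem_filter.mp hq
      obtain ⟨-, y1, y2⟩ := Finset.mem_filter.mp hq'
      simp only [Prod.mk.injEq] at he
      exact Prod.ext (Prod.ext he.1 (x2.trans y2.symm)) (Prod.ext (x1.trans y1.symm) he.2)
  have ctot : (s.card : ℝ) ≤ s1.card + s2.card + (s3.card + s4.card) := by
    have h := (Finset.card_le_card hcover).trans (Finset.card_union_le _ _)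
    have h1 := Finset.card_union_le s1 s2
    have h2 := Finset.card_union_le s3 s4
    have : s.card ≤ s1.card + s2.card + (s3.card + s4.card) := by omega
    exact_mod_cast this
  rw [Real.rpow_add (by positivity), Real.rpow_one]
  set X := (A : ℝ) * B
  set Y := X ^ ε
  have : X ≤ X * Y := by nlinarith
  calc (s.card : ℝ) ≤ _ := ctot
    _ ≤ 18 * (C * 4 ^ ε) * (X * Y) + 18 * X := by linarith
    _ ≤ 18 * (C * 4 ^ ε) * (X * Y) + 18 * (X * Y) := by linarith
    _ = _ := by ring

/-- quadruples of lattice points -/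
abbrev Quad := (ℤ × ℤ) × (ℤ × ℤ) × (ℤ × ℤ) × (ℤ × ℤ)

/-- the lattice box of radius `N` about the origin -/
noncomputable def lbox (N : ℕ) : Finset (ℤ × ℤ) := ibox 0 N ×ˢ ibox 0 N

/-- Relaxed membership with natural number bounds. -/
def Good (N N₁ N₂ N₃ : ℕ) (m : ℤ) (q : Quad) : Prop :=
  q.1 = q.2.1 - q.2.2.1 + q.2.2.2 ∧ q.1 ≠ q.2.1 ∧ q.1 ≠ q.2.2.2 ∧
  phiFn q.1 q.2.1 q.2.2.1 q.2.2.2 = m ∧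
  q.1 ∈ lbox N ∧ q.2.1 ∈ lbox N₁ ∧ q.2.2.1 ∈ lbox N₂ ∧ q.2.2.2 ∈ lbox N₃

lemma lbox_card (N : ℕ) (hN : 1 ≤ N) : ((lbox N).card : ℝ) ≤ 9 * (N : ℝ) ^ 2 := by
  have := ibox_prod_card 0 0 N N hN hN
  rw [sq]; exact this

lemma good_dot {N N₁ N₂ N₃ : ℕ} {m : ℤ} {q : Quad} (h : Good N N₁ N₂ N₃ m q) :
    2 * ((q.1.1 - q.2.1.1) * (q.1.1 - q.2.2.2.1) + (q.1.2 - q.2.1.2) * (q.1.2 - q.2.2.2.2)) = m := by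
  obtain ⟨⟨a, b⟩, ⟨a1, b1⟩, ⟨a2, b2⟩, ⟨a3, b3⟩⟩ := q
  obtain ⟨h1, -, -, h4, -⟩ := h
  simp only [Prod.mk_sub_mk, Prod.mk_add_mk, Prod.mk.injEq, phiFn, nsq] at h1 h4 ⊢
  obtain ⟨e1, e2⟩ := h1
  have f1 : a2 = a1 + a3 - a := by linarith
  have f2 : b2 = b1 + b3 - b := by linarith
  rw [← h4, f1, f2]; ring

lemma base1 (ε : ℝ) (hε : 0 < ε) : ∃ C : ℝ, 0 < C ∧ ∀ (N N₁ N₂ N₃ : ℕ) (m : ℤ) (s : Finset Quad),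
    1 ≤ N → 1 ≤ N₁ → 1 ≤ N₂ → 1 ≤ N₃ → (∀ q ∈ s, Good N N₁ N₂ N₃ m q) →
    (s.card : ℝ) ≤ C * ((N₁ : ℝ) ^ 2 * (N₃ : ℝ) ^ 2 * (N : ℝ) ^ ε) := by
  classical
  obtain ⟨C, hC, circ⟩ := circle_lemma ε hε
  refine ⟨81 * (C * 4 ^ ε), by positivity, fun N N₁ N₂ N₃ m s hN h1 h2 h3 hs => ?_⟩
  have hK : C * ((4 * N : ℕ) : ℝ) ^ ε = C * 4 ^ ε * (N : ℝ) ^ ε := by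
    rw [mul_assoc, ← Real.mul_rpow (by positivity) (by positivity)]
    push_cast; rfl
  refine (card_fiber_real s (lbox N₁ ×ˢ lbox N₃) (fun q => (q.2.1, q.2.2.2)) ?_
      (C * 4 ^ ε * (N : ℝ) ^ ε) ?_).trans ?_
  · intro q hq
    obtain ⟨-, -, -, -, -, x1, -, x3⟩ := hs q hq
    exact Finset.mem_product.mpr ⟨x1, x3⟩
  · intro b _
    set F := s.filter (fun q => (q.2.1, q.2.2.2) = b) with hF
    have hFm : ∀ q ∈ F, Good N N₁ N₂ N₃ m q ∧ q.2.1 = b.1 ∧ q.2.2.2 = b.2 := by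
      intro q hq
      obtain ⟨h1, h2⟩ := Finset.mem_filter.mp hq
      exact ⟨hs q h1, (Prod.ext_iff.mp h2).1, (Prod.ext_iff.mp h2).2⟩
    set g : Quad → ℤ × ℤ := fun q => (2 * q.1.1 - b.1.1 - b.2.1, 2 * q.1.2 - b.1.2 - b.2.2) with hg
    have hcard : F.card = (F.image g).card := by
      refine (Finset.card_image_of_injOn ?_).symm
      intro q hq q' hq' he
      obtain ⟨x, x1, x2⟩ := hFm q hq
      obtain ⟨y, y1, y2⟩ := hFm q' hq'
      simp only [hg, Prod.mk.injEq] at he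
      have e0 : q.1 = q'.1 := Prod.ext (by linarith [he.1]) (by linarith [he.2])
      have e1 : q.2.1 = q'.2.1 := x1.trans y1.symm
      have e3 : q.2.2.2 = q'.2.2.2 := x2.trans y2.symm
      have e2 : q.2.2.1 = q'.2.2.1 := by
        have u := x.1
        have v := y.1
        rw [e0, e1, e3, v] at u
        simpa using u.symm
      exact Prod.ext e0 (Prod.ext e1 (Prod.ext e2 e3))
    rw [hcard, ← hK]
    refine circ (4 * N) _ (2 * m + nsq (b.1 - b.2)) (by omega) ?_ ?_
    · intro w hw
      obtain ⟨q, hq, rfl⟩ := Finset.mem_image.mp hw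
      obtain ⟨x, x1, x2⟩ := hFm q hq
      have hd := good_dot x
      rw [x1, x2] at hd
      simp only [hg, nsq, Prod.fst_sub, Prod.snd_sub]
      rw [← hd]; ring
    · intro w hw w' hw'
      obtain ⟨q, hq, rfl⟩ := Finset.mem_image.mp hw
      obtain ⟨q', hq', rfl⟩ := Finset.mem_image.mp hw'
      obtain ⟨x1, x2⟩ := Finset.mem_product.mp (hFm q hq).1.2.2.2.2.1
      obtain ⟨y1, y2⟩ := Finset.mem_product.mp (hFm q' hq').1.2.2.2.2.1
      rw [mem_ibox] at x1 x2 y1 y2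
      simp only [hg, abs_le]; push_cast
      refine ⟨⟨?_, ?_⟩, ⟨?_, ?_⟩⟩ <;> linarith
  · rw [Finset.card_product]
    push_cast
    calc _ ≤ C * 4 ^ ε * (N : ℝ) ^ ε * ((9 * (N₁ : ℝ) ^ 2) * (9 * (N₃ : ℝ) ^ 2)) := by
          gcongr
          · exact lbox_card _ h1
          · exact lbox_card _ h3
      _ = _ := by ring

lemma base3 (ε : ℝ) (hε : 0 < ε) : ∃ C : ℝ, 0 < C ∧ ∀ (N N₁ N₂ N₃ : ℕ) (m : ℤ) (s : Finset Quad),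
    1 ≤ N → 1 ≤ N₁ → 1 ≤ N₂ → 1 ≤ N₃ → (∀ q ∈ s, Good N N₁ N₂ N₃ m q) →
    (s.card : ℝ) ≤ C * ((N : ℝ) ^ 2 * ((N₁ : ℝ) * (N₃ : ℝ)) ^ (1 + ε)) := by
  classical
  obtain ⟨C, hC, dot⟩ := dot_lemma ε hε
  refine ⟨9 * C, by positivity, fun N N₁ N₂ N₃ m s hN h1 h2 h3 hs => ?_⟩
  refine (card_fiber_real s (lbox N) (fun q => q.1) ?_
      (C * ((N₁ : ℝ) * (N₃ : ℝ)) ^ (1 + ε)) ?_).trans ?_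
  · intro q hq
    exact (hs q hq).2.2.2.2.1
  · intro b _
    set F := s.filter (fun q => q.1 = b) with hF
    have hFm : ∀ q ∈ F, Good N N₁ N₂ N₃ m q ∧ q.1 = b := by
      intro q hq
      obtain ⟨h1, h2⟩ := Finset.mem_filter.mp hq
      exact ⟨hs q h1, h2⟩
    set g : Quad → (ℤ × ℤ) × (ℤ × ℤ) := fun q => (b - q.2.1, b - q.2.2.2) with hg
    have hcard : F.card = (F.image g).card := by
      refine (Finset.card_image_of_injOn ?_).symm
      intro q hq q' hq' he
      obtain ⟨x, x1⟩ := hFm q hq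
      obtain ⟨y, y1⟩ := hFm q' hq'
      simp only [hg, Prod.mk.injEq] at he
      have e0 : q.1 = q'.1 := x1.trans y1.symm
      have e1 : q.2.1 = q'.2.1 := sub_right_injective he.1
      have e3 : q.2.2.2 = q'.2.2.2 := sub_right_injective he.2
      have e2 : q.2.2.1 = q'.2.2.1 := by
        have u := x.1
        have v := y.1
        rw [e0, e1, e3, v] at u
        simpa using u.symm
      exact Prod.ext e0 (Prod.ext e1 (Prod.ext e2 e3))
    rw [hcard]
    refine dot N₁ N₃ b _ (m / 2) h1 h3 ?_
    intro w hw
    obtain ⟨q, hq, rfl⟩ := Finset.mem_image.mp hw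
    obtain ⟨x, x1⟩ := hFm q hq
    have hd := good_dot x
    obtain ⟨-, ne1, ne3, -, -, m1, -, m3⟩ := x
    obtain ⟨m11, m12⟩ := Finset.mem_product.mp m1
    obtain ⟨m31, m32⟩ := Finset.mem_product.mp m3
    rw [x1] at hd ne1 ne3
    rw [mem_ibox] at m11 m12 m31 m32
    simp only [hg, mem_ibox, Prod.fst_sub, Prod.snd_sub]
    refine ⟨⟨by linarith, by linarith⟩, ⟨by linarith, by linarith⟩, ⟨by linarith, by linarith⟩,
      ⟨by linarith, by linarith⟩, sub_ne_zero.mpr ne1, sub_ne_zero.mpr ne3, ?_⟩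
    omega
  · calc _ ≤ C * ((N₁ : ℝ) * (N₃ : ℝ)) ^ (1 + ε) * (9 * (N : ℝ) ^ 2) := by
          gcongr
          exact lbox_card _ hN
      _ = _ := by ring

/-- exchange `n` and `n₂` -/
def sw1 (q : Quad) : Quad := (q.2.2.1, q.2.1, q.1, q.2.2.2)

/-- exchange the pairs `(n, n₂)` and `(n₁, n₃)` -/
def sw2 (q : Quad) : Quad := (q.2.1, q.1, q.2.2.2, q.2.2.1)

lemma sw1_inj : Function.Injective sw1 := by
  intro a b h
  simp only [sw1, Prod.mk.injEq] at h
  obtain ⟨h1, h2, h3, h4⟩ := h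
  exact Prod.ext h3 (Prod.ext h2 (Prod.ext h1 h4))

lemma sw2_inj : Function.Injective sw2 := by
  intro a b h
  simp only [sw2, Prod.mk.injEq] at h
  obtain ⟨h1, h2, h3, h4⟩ := h
  exact Prod.ext h2 (Prod.ext h1 (Prod.ext h4 h3))

lemma good_sw1 {N N₁ N₂ N₃ : ℕ} {m : ℤ} {q : Quad} (h : Good N N₁ N₂ N₃ m q) :
    Good N₂ N₁ N N₃ m (sw1 q) := by
  obtain ⟨h1, h2, h3, h4, h5, h6, h7, h8⟩ := h
  refine ⟨?_, ?_, ?_, ?_, h7, h6, h5, h8⟩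
  · simp only [sw1]; rw [h1]; abel
  · simp only [sw1]; intro h; apply h3; rw [h1, h]; abel
  · simp only [sw1]; intro h; apply h2; rw [h1, h]; abel
  · simp only [sw1, phiFn] at h4 ⊢; linarith

lemma good_sw2 {N N₁ N₂ N₃ : ℕ} {m : ℤ} {q : Quad} (h : Good N N₁ N₂ N₃ m q) :
    Good N₁ N N₃ N₂ (-m) (sw2 q) := by
  obtain ⟨h1, h2, h3, h4, h5, h6, h7, h8⟩ := h
  refine ⟨?_, ?_, ?_, ?_, h6, h5, h8, h7⟩
  · simp only [sw2]; rw [h1]; abel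
  · simp only [sw2]; exact h2.symm
  · simp only [sw2]; intro h; apply h3; rw [h1, h]; abel
  · simp only [sw2, phiFn] at h4 ⊢; linarith

lemma combined (ε : ℝ) (hε : 0 < ε) : ∃ C : ℝ, 0 < C ∧ ∀ (N N₁ N₂ N₃ : ℕ) (m : ℤ) (s : Finset Quad),
    1 ≤ N → 1 ≤ N₁ → 1 ≤ N₂ → 1 ≤ N₃ → (∀ q ∈ s, Good N N₁ N₂ N₃ m q) →
    (s.card : ℝ) ≤ C * ((N₁ : ℝ) ^ 2 * (N₃ : ℝ) ^ 2 * (min (N : ℝ) N₂) ^ ε) ∧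
    (s.card : ℝ) ≤ C * ((min (N : ℝ) N₂) ^ 2 * ((N₁ : ℝ) * (N₃ : ℝ)) ^ (1 + ε)) := by
  classical
  obtain ⟨C1, hC1, H1⟩ := base1 ε hε
  obtain ⟨C3, hC3, H3⟩ := base3 ε hε
  refine ⟨C1 + C3, by positivity, fun N N₁ N₂ N₃ m s hN h1 h2 h3 hs => ?_⟩
  have hs' : ∀ q ∈ s.image sw1, Good N₂ N₁ N N₃ m q := by
    intro q hq
    obtain ⟨p, hp, rfl⟩ := Finset.mem_image.mp hq
    exact good_sw1 (hs p hp)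
  have hc : (s.image sw1).card = s.card := Finset.card_image_of_injective s sw1_inj
  constructor
  · rw [add_mul]
    refine le_trans ?_ (le_add_of_nonneg_right (by positivity))
    rcases min_choice (N : ℝ) N₂ with h | h <;> rw [h]
    · exact H1 N N₁ N₂ N₃ m s hN h1 h2 h3 hs
    · rw [← hc]; exact H1 N₂ N₁ N N₃ m _ h2 h1 hN h3 hs'
  · rw [add_mul]
    refine le_trans ?_ (le_add_of_nonneg_left (by positivity))
    rcases min_choice (N : ℝ) N₂ with h | h <;> rw [h]
    · exact H3 N N₁ N₂ N₃ m s hN h1 h2 h3 hs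
    · rw [← hc]; exact H3 N₂ N₁ N N₃ m _ h2 h1 hN h3 hs'

lemma sim_lbox {N : ℝ} {k : ℕ} (hN : N = 2 ^ k) {n : ℤ × ℤ} (h : simDyadic N n) :
    n ∈ lbox (2 ^ k) := by
  have hz : znorm n ≤ N := by
    rcases h with ⟨h1, h2⟩ | ⟨-, -, h2⟩
    · rw [h1]; exact h2
    · exact h2
  have a1 : |(n.1 : ℝ)| ≤ N := by
    refine le_trans ?_ hz
    rw [znorm, ← Real.sqrt_sq_eq_abs]
    exact Real.sqrt_le_sqrt (by linarith [sq_nonneg (n.2 : ℝ)])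
  have a2 : |(n.2 : ℝ)| ≤ N := by
    refine le_trans ?_ hz
    rw [znorm, ← Real.sqrt_sq_eq_abs]
    exact Real.sqrt_le_sqrt (by linarith [sq_nonneg (n.1 : ℝ)])
  rw [hN] at a1 a2
  have b1 : |n.1| ≤ (2 : ℤ) ^ k := by exact_mod_cast a1
  have b2 : |n.2| ≤ (2 : ℤ) ^ k := by exact_mod_cast a2
  rw [abs_le] at b1 b2
  refine Finset.mem_product.mpr ⟨mem_ibox.mpr ?_, mem_ibox.mpr ?_⟩ <;> push_cast <;>
    constructor <;> linarith

theorem stmt4 (ε : ℝ) (hε : 0 < ε) :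
    ∃ C : ℝ, 0 < C ∧ ∀ N N₁ N₂ N₃ : ℝ,
      IsDyadic N → IsDyadic N₁ → IsDyadic N₂ → IsDyadic N₃ → ∀ m : ℤ,
      (({q : (ℤ × ℤ) × (ℤ × ℤ) × (ℤ × ℤ) × (ℤ × ℤ) |
          SMem N N₁ N₂ N₃ m q.1 q.2.1 q.2.2.1 q.2.2.2}).ncard : ℝ) ≤
        C * min (min (N₁ ^ 2 * N₃ ^ 2 * (min N N₂) ^ ε) (N ^ 2 * N₂ ^ 2 * (min N₁ N₃) ^ ε))
                (min ((min N N₂) ^ 2 * (N₁ * N₃) ^ (1 + ε))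
                     ((min N₁ N₃) ^ 2 * (N * N₂) ^ (1 + ε))) := by
  classical
  obtain ⟨C, hC, H⟩ := combined ε hε
  refine ⟨C, hC, ?_⟩
  rintro N N₁ N₂ N₃ ⟨k, hk⟩ ⟨k₁, hk₁⟩ ⟨k₂, hk₂⟩ ⟨k₃, hk₃⟩ m
  set S : Set Quad := {q | SMem N N₁ N₂ N₃ m q.1 q.2.1 q.2.2.1 q.2.2.2} with hS
  have hgood : ∀ q ∈ S, Good (2 ^ k) (2 ^ k₁) (2 ^ k₂) (2 ^ k₃) m q := by
    intro q hq
    obtain ⟨h1, h2, h3, h4, h5, h6, h7, h8⟩ := hq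
    exact ⟨h1, h2, h3, h4, sim_lbox hk h5, sim_lbox hk₁ h6, sim_lbox hk₂ h7, sim_lbox hk₃ h8⟩
  have hfin : S.Finite := by
    refine (Finset.finite_toSet
      (lbox (2 ^ k) ×ˢ lbox (2 ^ k₁) ×ˢ lbox (2 ^ k₂) ×ˢ lbox (2 ^ k₃))).subset ?_
    intro q hq
    obtain ⟨-, -, -, -, h5, h6, h7, h8⟩ := hgood q hq
    simp only [Finset.mem_coe, Finset.mem_product]
    exact ⟨h5, h6, h7, h8⟩
  set s : Finset Quad := hfin.toFinset with hs
  have hsg : ∀ q ∈ s, Good (2 ^ k) (2 ^ k₁) (2 ^ k₂) (2 ^ k₃) m q := fun q hq =>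
    hgood q (hfin.mem_toFinset.mp hq)
  have hsg' : ∀ q ∈ s.image sw2, Good (2 ^ k₁) (2 ^ k) (2 ^ k₃) (2 ^ k₂) (-m) q := by
    intro q hq
    obtain ⟨p, hp, rfl⟩ := Finset.mem_image.mp hq
    exact good_sw2 (hsg p hp)
  have hc : (s.image sw2).card = s.card := Finset.card_image_of_injective s sw2_inj
  have hcard : S.ncard = s.card := Set.ncard_eq_toFinset_card S hfin
  obtain ⟨A1, A3⟩ := H _ _ _ _ m s Nat.one_le_two_pow Nat.one_le_two_pow Nat.one_le_two_pow
    Nat.one_le_two_pow hsg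
  obtain ⟨A2, A4⟩ := H _ _ _ _ (-m) _ Nat.one_le_two_pow Nat.one_le_two_pow Nat.one_le_two_pow
    Nat.one_le_two_pow hsg'
  rw [hc] at A2 A4
  push_cast at A1 A2 A3 A4
  rw [← hk, ← hk₁, ← hk₂, ← hk₃] at A1 A2 A3 A4
  rw [hcard]
  rw [mul_min_of_nonneg _ _ hC.le, mul_min_of_nonneg _ _ hC.le, mul_min_of_nonneg _ _ hC.le]
  exact le_min (le_min A1 A2) (le_min A3 A4)
end

section
/- For every ε > 0 there exists C_ε > 0 with the following property. For all dyadic N, N₁, N₂, N₃ ≥ 1, all m ∈ ℤ, and every fixed n ∈ ℤ², the number of triples (n₁, n₂, n₃) with (n, n₁, n₂, n₃) ∈ S^{𝐍,(m)} is at most C_ε · min( N₂² (min(N₁, N₃))^ε, (N₁ N₂)^{1+ε}, (N₁ N₃)^{1+ε}, (N₂ N₃)^{1+ε} ), uniformly in n and m. -/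
/-! ### A uniform bound for divisor-like functions -/

lemma aux_arith (ε : ℝ) (hε : 0 < ε) : ∃ C : ℝ, 1 ≤ C ∧ ∀ f : ℕ → ℕ, f 1 ≤ 4 →
    (∀ p e m : ℕ, p.Prime → ¬ p ∣ m → f (p ^ e * m) ≤ (e + 1) * f m) →
    ∀ n : ℕ, 0 < n → (f n : ℝ) ≤ C * (n : ℝ) ^ ε := by
  obtain ⟨P, hP⟩ := exists_nat_ge ((2 : ℝ) ^ (1 / ε))
  set C0 : ℝ := 1 + 1 / (ε * Real.log 2) with hC0
  have hlog : 0 < Real.log 2 := Real.log_pos (by norm_num)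
  have hC01 : 1 ≤ C0 := by
    have : 0 < 1 / (ε * Real.log 2) := by positivity
    linarith
  have small : ∀ (p e : ℕ), p.Prime → ((e : ℝ) + 1) ≤ C0 * ((p : ℝ) ^ e) ^ ε := by
    intro p e hp
    have hp2 : (2 : ℝ) ≤ p := by exact_mod_cast hp.two_le
    have h1 : ((2 : ℝ) ^ e) ^ ε ≤ ((p : ℝ) ^ e) ^ ε := by gcongr
    have h2 : 1 + (e : ℝ) * (ε * Real.log 2) ≤ ((2 : ℝ) ^ e) ^ ε := by
      rw [← Real.rpow_natCast, ← Real.rpow_mul (by norm_num), Real.rpow_def_of_pos (by norm_num)]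
      have := Real.add_one_le_exp (Real.log 2 * ((e : ℝ) * ε))
      nlinarith
    have h3 : (e : ℝ) + 1 ≤ C0 * (1 + (e : ℝ) * (ε * Real.log 2)) := by
      rw [hC0]
      have hx : 0 < ε * Real.log 2 := by positivity
      set x := ε * Real.log 2
      have : (1 + 1 / x) * (1 + (e : ℝ) * x) = 1 + e * x + 1 / x + e := by field_simp; ring
      rw [this]
      have : 0 < 1 / x := by positivity
      have : 0 ≤ e * x := by positivity
      linarith
    calc (e : ℝ) + 1 ≤ C0 * (1 + (e : ℝ) * (ε * Real.log 2)) := h3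
      _ ≤ C0 * ((p : ℝ) ^ e) ^ ε := by
        apply mul_le_mul_of_nonneg_left (h2.trans h1); linarith
  have large : ∀ (p e : ℕ), P ≤ p → ((e : ℝ) + 1) ≤ ((p : ℝ) ^ e) ^ ε := by
    intro p e hp
    have h1 : (2 : ℝ) ^ (1 / ε) ≤ p := hP.trans (by exact_mod_cast hp)
    have h2 : (2 : ℝ) ≤ (p : ℝ) ^ ε := by
      calc (2 : ℝ) = ((2 : ℝ) ^ (1 / ε)) ^ ε := by
            rw [← Real.rpow_mul (by norm_num)]; field_simp; simp
        _ ≤ _ := by gcongr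
    have h3 : ((p : ℝ) ^ e) ^ ε = ((p : ℝ) ^ ε) ^ e := by
      rw [← Real.rpow_natCast, ← Real.rpow_mul (by positivity), mul_comm, Real.rpow_mul (by positivity),
        Real.rpow_natCast]
    rw [h3]
    have h4 : ((e + 1 : ℕ) : ℝ) ≤ ((2 ^ e : ℕ) : ℝ) := by
      exact_mod_cast Nat.lt_two_pow_self
    push_cast at h4
    exact h4.trans (by gcongr)
  refine ⟨4 * C0 ^ P, ?_, ?_⟩
  · have : 1 ≤ C0 ^ P := one_le_pow₀ hC01
    linarith
  intro f hf1 hf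
  have key : ∀ n : ℕ, 0 < n →
      (f n : ℝ) ≤ 4 * C0 ^ (n.primeFactors.filter (· < P)).card * (n : ℝ) ^ ε := by
    intro n
    induction n using Nat.recOnPrimePow with
    | zero => intro h; exact absurd h (lt_irrefl _)
    | one => intro _; simpa using hf1
    | prime_pow_mul a p e hp hpa he ih =>
      intro hpos
      have ha : 0 < a := Nat.pos_of_mul_pos_left hpos
      have ih := ih ha
      have hcop : Nat.Coprime (p ^ e) a := Nat.Coprime.pow_left _ ((Nat.Prime.coprime_iff_not_dvd hp).2 hpa)
      have hpf : (p ^ e * a).primeFactors = insert p a.primeFactors := by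
        rw [hcop.primeFactors_mul, Nat.primeFactors_prime_pow he.ne' hp]; rfl
      have hnot : p ∉ a.primeFactors := fun h => hpa (Nat.dvd_of_mem_primeFactors h)
      have hfe : (f (p ^ e * a) : ℝ) ≤ ((e : ℝ) + 1) * f a := by exact_mod_cast hf p e a hp hpa
      have hpw : (((p ^ e * a : ℕ) : ℝ)) ^ ε = ((p : ℝ) ^ e) ^ ε * (a : ℝ) ^ ε := by
        push_cast
        rw [Real.mul_rpow (by positivity) (by positivity)]
      rw [hpw, hpf, Finset.filter_insert]
      split_ifs with hlt
      · rw [Finset.card_insert_of_notMem (by simp [hpa])]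
        calc (f (p ^ e * a) : ℝ) ≤ ((e : ℝ) + 1) * f a := hfe
          _ ≤ (C0 * ((p : ℝ) ^ e) ^ ε) *
              (4 * C0 ^ (a.primeFactors.filter (· < P)).card * (a : ℝ) ^ ε) := by
            gcongr
            exact small p e hp
          _ = _ := by ring
      · calc (f (p ^ e * a) : ℝ) ≤ ((e : ℝ) + 1) * f a := hfe
          _ ≤ (((p : ℝ) ^ e) ^ ε) *
              (4 * C0 ^ (a.primeFactors.filter (· < P)).card * (a : ℝ) ^ ε) := by
            gcongr
            exact large p e (not_lt.1 hlt)
          _ = _ := by ring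
  intro n hn
  refine (key n hn).trans ?_
  gcongr
  calc (n.primeFactors.filter (· < P)).card ≤ (Finset.range P).card := by
        apply Finset.card_le_card
        intro x hx
        simp at hx ⊢
        exact hx.2
    _ = P := by simp

lemma aux_divisors (p e m : ℕ) (hp : p.Prime) (hpm : ¬ p ∣ m) :
    (p ^ e * m).divisors.card ≤ (e + 1) * m.divisors.card := by
  have hcop : Nat.Coprime (p ^ e) m := Nat.Coprime.pow_left _ ((Nat.Prime.coprime_iff_not_dvd hp).2 hpm)
  rw [hcop.card_divisors_mul, Nat.divisors_prime_pow hp]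
  simp

/-! ### Representations as a sum of two squares -/

lemma gset_finite (n : ℕ) : {z : GaussianInt | z.norm = n}.Finite := by
  have : Set.Finite ((fun q : ℤ × ℤ => (⟨q.1, q.2⟩ : GaussianInt)) ''
      ((Finset.Icc (-(n : ℤ)) n ×ˢ Finset.Icc (-(n : ℤ)) n : Finset (ℤ × ℤ)) : Set (ℤ × ℤ))) :=
    (Finset.finite_toSet _).image _
  refine this.subset ?_
  rintro ⟨x, y⟩ hz
  simp only [Set.mem_ofPred_eq, Zsqrtd.norm_def] at hz
  refine ⟨(x, y), ?_, rfl⟩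
  simp only [Finset.coe_product, Finset.coe_Icc, Set.mem_prod, Set.mem_Icc]
  refine ⟨⟨?_, ?_⟩, ?_, ?_⟩ <;> nlinarith [sq_nonneg x, sq_nonneg y, sq_nonneg (x-1), sq_nonneg (x+1), sq_nonneg (y+1), sq_nonneg (y-1)]

noncomputable def gset (n : ℕ) : Finset GaussianInt := (gset_finite n).toFinset

lemma mem_gset (n : ℕ) (z : GaussianInt) : z ∈ gset n ↔ z.norm = n := by simp [gset]

lemma gset_one : (gset 1).card ≤ 4 := by
  classical
  have : gset 1 ⊆ ({⟨1, 0⟩, ⟨-1, 0⟩, ⟨0, 1⟩, ⟨0, -1⟩} : Finset GaussianInt) := by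
    rintro ⟨x, y⟩ hz
    rw [mem_gset, Zsqrtd.norm_def] at hz
    simp only [Nat.cast_one] at hz
    have h1 : -1 ≤ x := by nlinarith [sq_nonneg y]
    have h2 : x ≤ 1 := by nlinarith [sq_nonneg y]
    have h3 : -1 ≤ y := by nlinarith [sq_nonneg x]
    have h4 : y ≤ 1 := by nlinarith [sq_nonneg x]
    interval_cases x <;> interval_cases y <;> simp_all
  refine (Finset.card_le_card this).trans ?_
  exact Finset.card_le_four

lemma gprime_of_norm (w : GaussianInt) (p : ℕ) (hp : p.Prime) (h : w.norm = p) : Prime w := by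
  rw [← irreducible_iff_prime]
  refine ⟨?_, ?_⟩
  · intro hu
    rw [← Zsqrtd.norm_eq_one_iff, h] at hu
    simp at hu
    exact hp.one_lt.ne' hu
  · intro a b hab
    have h2 : a.norm.natAbs * b.norm.natAbs = p := by
      rw [← Int.natAbs_mul, ← Zsqrtd.norm_mul, ← hab, h]; simp
    rw [← Zsqrtd.norm_eq_one_iff, ← Zsqrtd.norm_eq_one_iff]
    rcases (Nat.dvd_prime hp).1 (Dvd.intro _ h2) with h3 | h3
    · exact Or.inl h3
    · right
      rw [h3] at h2
      exact Nat.eq_of_mul_eq_mul_left hp.pos (by rw [h2, mul_one])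

lemma g_split (w : GaussianInt) (p : ℕ) (hp : p.Prime) (h : w.norm = p) (m : ℕ) :
    ∀ e : ℕ, ∀ z : GaussianInt, z.norm = ((p ^ e * m : ℕ) : ℤ) →
      ∃ i ∈ Finset.range (e + 1), ∃ v ∈ gset m, w ^ i * (star w) ^ (e - i) * v = z := by
  have hw := gprime_of_norm w p hp h
  have hp0 : (p : ℤ) ≠ 0 := by exact_mod_cast hp.ne_zero
  intro e
  induction e with
  | zero =>
    intro z hz
    exact ⟨0, by simp, z, by rw [mem_gset]; simpa using hz, by simp⟩
  | succ e ih =>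
    intro z hz
    have hd : w ∣ z * star z := by
      rw [← Zsqrtd.norm_eq_mul_conj, hz]
      refine ⟨star w * ((p ^ e * m : ℕ) : GaussianInt), ?_⟩
      rw [← mul_assoc, ← Zsqrtd.norm_eq_mul_conj, h]
      push_cast
      ring
    rcases hw.dvd_or_dvd hd with ⟨u, hu⟩ | ⟨u, hu⟩
    · have hun : u.norm = ((p ^ e * m : ℕ) : ℤ) := by
        rw [hu, Zsqrtd.norm_mul, h] at hz
        apply mul_left_cancel₀ hp0
        rw [hz]; push_cast; ring
      obtain ⟨i, hi, v, hv, hvu⟩ := ih u hun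
      simp at hi
      refine ⟨i + 1, by simp; omega, v, hv, ?_⟩
      rw [hu, ← hvu, show e + 1 - (i + 1) = e - i by omega]
      ring
    · have hz' : z = star w * star u := by
        have := congrArg star hu
        rw [star_star, star_mul'] at this
        exact this
      have hun : (star u).norm = ((p ^ e * m : ℕ) : ℤ) := by
        rw [hz', Zsqrtd.norm_mul, Zsqrtd.norm_conj w, h] at hz
        apply mul_left_cancel₀ hp0
        rw [hz]; push_cast; ring
      obtain ⟨i, hi, v, hv, hvu⟩ := ih _ hun
      simp at hi
      refine ⟨i, by simp; omega, v, hv, ?_⟩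
      rw [hz', ← hvu, show e + 1 - i = (e - i) + 1 by omega]
      ring

lemma g_inert (p : ℕ) (hp : p.Prime) (h : Prime (p : GaussianInt)) (m : ℕ) (hpm : ¬ p ∣ m) :
    ∀ e : ℕ, ∀ z : GaussianInt, z.norm = ((p ^ e * m : ℕ) : ℤ) →
      ∃ v ∈ gset m, (p : GaussianInt) ^ (e / 2) * v = z := by
  have hp0 : (p : ℤ) ≠ 0 := by exact_mod_cast hp.ne_zero
  have step : ∀ (z : GaussianInt) (k : ℕ), z.norm = ((p * k : ℕ) : ℤ) →
      ∃ u : GaussianInt, z = p * u ∧ (p : ℤ) * u.norm = k := by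
    intro z k hz
    have hd : (p : GaussianInt) ∣ z * star z := by
      rw [← Zsqrtd.norm_eq_mul_conj, hz]
      exact ⟨(k : GaussianInt), by push_cast; ring⟩
    have hd2 : (p : GaussianInt) ∣ z := by
      rcases h.dvd_or_dvd hd with h1 | ⟨u, hu⟩
      · exact h1
      · refine ⟨star u, ?_⟩
        have := congrArg star hu
        rw [star_star, star_mul'] at this
        rw [this]; simp
    obtain ⟨u, hu⟩ := hd2
    refine ⟨u, hu, ?_⟩
    rw [hu, Zsqrtd.norm_mul, Zsqrtd.norm_natCast] at hz
    apply mul_left_cancel₀ hp0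
    push_cast at hz
    linarith
  intro e
  induction e using Nat.strong_induction_on with
  | _ e ih =>
    intro z hz
    match e with
    | 0 => exact ⟨z, by rw [mem_gset]; simpa using hz, by simp⟩
    | 1 =>
      obtain ⟨u, hu, hk⟩ := step z m (by rw [hz]; simp)
      exact absurd (by exact_mod_cast Dvd.intro _ hk : p ∣ m) hpm
    | e + 2 =>
      obtain ⟨u, hu, hk⟩ := step z (p ^ (e + 1) * m) (by rw [hz]; push_cast; ring)
      have hun : u.norm = ((p ^ e * m : ℕ) : ℤ) := by
        apply mul_left_cancel₀ hp0
        rw [hk]; push_cast; ring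
      obtain ⟨v, hv, hvu⟩ := ih e (by omega) u hun
      refine ⟨v, hv, ?_⟩
      rw [hu, ← hvu, show (e + 2) / 2 = e / 2 + 1 by omega]
      ring

lemma aux_gset (p e m : ℕ) (hp : p.Prime) (hpm : ¬ p ∣ m) :
    (gset (p ^ e * m)).card ≤ (e + 1) * (gset m).card := by
  classical
  have := Fact.mk hp
  by_cases h3 : p % 4 = 3
  · have hpr := GaussianInt.prime_of_nat_prime_of_mod_four_eq_three p h3
    have : gset (p ^ e * m) ⊆ (gset m).image (fun v => (p : GaussianInt) ^ (e / 2) * v) := by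
      intro z hz
      rw [mem_gset] at hz
      obtain ⟨v, hv, h⟩ := g_inert p hp hpr m hpm e z hz
      exact Finset.mem_image.2 ⟨v, hv, h⟩
    calc _ ≤ _ := Finset.card_le_card this
      _ ≤ (gset m).card := Finset.card_image_le
      _ ≤ _ := Nat.le_mul_of_pos_left _ (by omega)
  · obtain ⟨a, b, hab⟩ := Nat.Prime.sq_add_sq h3
    set w : GaussianInt := ⟨a, b⟩
    have hw : w.norm = p := by
      rw [Zsqrtd.norm_def, ← hab]; simp only [w]; push_cast; ring
    have : gset (p ^ e * m) ⊆ (Finset.range (e + 1)).biUnion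
        (fun i => (gset m).image (fun v => w ^ i * (star w) ^ (e - i) * v)) := by
      intro z hz
      rw [mem_gset] at hz
      obtain ⟨i, hi, v, hv, h⟩ := g_split w p hp hw m e z hz
      exact Finset.mem_biUnion.2 ⟨i, hi, Finset.mem_image.2 ⟨v, hv, h⟩⟩
    calc _ ≤ _ := Finset.card_le_card this
      _ ≤ (Finset.range (e + 1)).card * (gset m).card :=
        Finset.card_biUnion_le_card_mul _ _ _ (fun i _ => Finset.card_image_le)
      _ = _ := by simp

/-! ### Three lattice points on a conic -/

lemma hyper_three (k a b a' b' a'' b'' : ℤ) (M : ℤ) (hk : k ≠ 0) (h : a * b = k) (h' : a' * b' = k)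
    (h'' : a'' * b'' = k) (h1 : a ≠ a') (h2 : a ≠ a'') (h3 : a' ≠ a'')
    (d1 : |a - a'| ≤ M) (d2 : |a - a''| ≤ M) (d3 : |a' - a''| ≤ M)
    (l : |k| ≤ a ^ 2) (l' : |k| ≤ a' ^ 2) (l'' : |k| ≤ a'' ^ 2) : |k| ≤ M ^ 6 := by
  set D := (-((a' - a) * (b'' - b) - (a'' - a) * (b' - b))) with hD
  set T := (a - a') * (a - a'') * (a' - a'') with hT
  have key : k * T = a * a' * a'' * D := by grind
  have hT0 : T ≠ 0 := mul_ne_zero (mul_ne_zero (sub_ne_zero.2 h1) (sub_ne_zero.2 h2)) (sub_ne_zero.2 h3)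
  have hD0 : D ≠ 0 := by
    intro h0
    rw [h0, mul_zero] at key
    exact (mul_ne_zero hk hT0) key
  have hD1 : 1 ≤ D ^ 2 := by
    have := sq_pos_of_ne_zero hD0
    omega
  have hM : 0 ≤ M := (abs_nonneg _).trans d1
  have hTM : T ^ 2 ≤ M ^ 6 := by
    have : |T| ≤ M * M * M := by
      rw [hT, abs_mul, abs_mul]; gcongr
    calc T ^ 2 = |T| ^ 2 := (sq_abs _).symm
      _ ≤ (M * M * M) ^ 2 := by gcongr
      _ = M ^ 6 := by ring
  have hprod : |k| * |k| * |k| ≤ k ^ 2 * M ^ 6 := by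
    calc |k| * |k| * |k| ≤ a ^ 2 * a' ^ 2 * a'' ^ 2 := by gcongr
      _ ≤ (a ^ 2 * a' ^ 2 * a'' ^ 2) * D ^ 2 := le_mul_of_one_le_right (by positivity) hD1
      _ = (k * T) ^ 2 := by rw [key]; ring
      _ = k ^ 2 * T ^ 2 := by ring
      _ ≤ k ^ 2 * M ^ 6 := by gcongr
  have hk2 : |k| * |k| = k ^ 2 := by rw [← sq, sq_abs]
  rw [hk2] at hprod
  exact le_of_mul_le_mul_left hprod (by positivity)

lemma circle_id_s5 (R u v x y s t : ℤ) (h1 : u^2 + v^2 = R) (h2 : x^2+y^2 = R) (h3 : s^2+t^2=R) :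
   4 * R * ((x-u)*(t-v) - (s-u)*(y-v))^2 = ((u-x)^2+(v-y)^2) * ((u-s)^2+(v-t)^2)*((x-s)^2+(y-t)^2) := by
  have e1 : (u-x)^2+(v-y)^2 = 2*(R - (u*x+v*y)) := by linear_combination h1 + h2
  have e2 : (u-s)^2+(v-t)^2 = 2*(R - (u*s+v*t)) := by linear_combination h1 + h3
  have e3 : (x-s)^2+(y-t)^2 = 2*(R - (x*s+y*t)) := by linear_combination h2 + h3
  rw [e1, e2, e3]
  have g : R^3 + 2 * (u*x+v*y)*(u*s+v*t)*(x*s+y*t) - R * ((u*x+v*y)^2+(u*s+v*t)^2+(x*s+y*t)^2) = 0 := by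
    have : (u^2+v^2)*(x^2+y^2)*(s^2+t^2) + 2 * (u*x+v*y)*(u*s+v*t)*(x*s+y*t) - (s^2+t^2)*(u*x+v*y)^2-(x^2+y^2)*(u*s+v*t)^2-(u^2+v^2)*(x*s+y*t)^2 = 0 := by ring
    rw [h1,h2,h3] at this
    linear_combination this
  have hD : ((x-u)*(t-v) - (s-u)*(y-v))^2 = 3*R^2 - (u*x+v*y)^2 - (u*s+v*t)^2 - (x*s+y*t)^2 + 2*((u*x+v*y)*(x*s+y*t) - (u*s+v*t)*R + (u*s+v*t)*(x*s+y*t) - (u*x+v*y)*R + (u*x+v*y)*(u*s+v*t) - (x*s+y*t)*R) := by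
    have : ((x-u)*(t-v) - (s-u)*(y-v))^2 = (u^2+v^2)*(x^2+y^2) + (u^2+v^2)*(s^2+t^2)+(s^2+t^2)*(x^2+y^2) - (u*x+v*y)^2 - (u*s+v*t)^2 - (x*s+y*t)^2 + 2*((u*x+v*y)*(x*s+y*t) - (u*s+v*t)*(x^2+y^2) + (u*s+v*t)*(x*s+y*t) - (u*x+v*y)*(s^2+t^2) + (u*x+v*y)*(u*s+v*t) - (x*s+y*t)*(u^2+v^2)) := by ring
    rw [h1,h2,h3] at this
    linear_combination this
  rw [hD]
  linear_combination 4 * g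

lemma circle_three (R u v x y s t M : ℤ) (h1 : u^2 + v^2 = R) (h2 : x^2+y^2 = R) (h3 : s^2+t^2=R)
    (n1 : (u, v) ≠ (x, y)) (n2 : (u, v) ≠ (s, t)) (n3 : (x, y) ≠ (s, t))
    (a1 : |u - x| ≤ M) (a2 : |v - y| ≤ M) (b1 : |u - s| ≤ M) (b2 : |v - t| ≤ M)
    (c1 : |x - s| ≤ M) (c2 : |y - t| ≤ M) : R ≤ 2 * M ^ 6 := by
  have key := circle_id_s5 R u v x y s t h1 h2 h3
  have pos : ∀ p q p' q' : ℤ, (p, q) ≠ (p', q') → 0 < (p - p') ^ 2 + (q - q') ^ 2 := by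
    intro p q p' q' h
    by_cases hp : p = p'
    · have hq : q ≠ q' := by
        rintro rfl
        exact h (by rw [hp])
      have := sub_ne_zero.2 hq
      positivity
    · have := sub_ne_zero.2 hp
      positivity
  have up : ∀ p q : ℤ, |p| ≤ M → |q| ≤ M → p ^ 2 + q ^ 2 ≤ 2 * M ^ 2 := by
    intro p q hp hq
    have h1 : |p| ^ 2 ≤ M ^ 2 := by gcongr
    have h2 : |q| ^ 2 ≤ M ^ 2 := by gcongr
    rw [sq_abs] at h1 h2
    linarith
  set D := (x-u)*(t-v) - (s-u)*(y-v) with hD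
  have p1 := pos _ _ _ _ n1
  have p2 := pos _ _ _ _ n2
  have p3 := pos _ _ _ _ n3
  have hpos : 0 < 4 * R * D ^ 2 := by rw [key]; positivity
  have hR : 0 ≤ R := by rw [← h1]; positivity
  have hD1 : 1 ≤ D ^ 2 := by
    have : D ^ 2 ≠ 0 := by
      intro h; rw [h] at hpos; simp at hpos
    have := sq_nonneg D
    omega
  have : 4 * R ≤ 8 * M ^ 6 := by
    calc 4 * R ≤ 4 * R * D ^ 2 := le_mul_of_one_le_right (by positivity) hD1
      _ = _ := key
      _ ≤ (2 * M ^ 2) * (2 * M ^ 2) * (2 * M ^ 2) := by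
        gcongr
        · exact up _ _ a1 a2
        · exact up _ _ b1 b2
        · exact up _ _ c1 c2
      _ = 8 * M ^ 6 := by ring
  linarith

/-! ### Localised divisor and circle bounds -/

lemma rpow_six (c L : ℕ) (ε : ℝ) : ((((c * L) ^ 6 : ℕ) : ℝ)) ^ (ε / 6) = (c : ℝ) ^ ε * (L : ℝ) ^ ε := by
  push_cast
  rw [← Real.rpow_natCast, ← Real.rpow_mul (by positivity), Real.mul_rpow (by positivity) (by positivity)]
  congr 2 <;> (push_cast; ring)

lemma abs_sub_le_two {x y c : ℤ} {L : ℤ} (hx : |x - c| ≤ L) (hy : |y - c| ≤ L) : |x - y| ≤ 2 * L := by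
  rw [abs_le] at *
  constructor <;> linarith [hx.1, hx.2, hy.1, hy.2]

lemma local_div (ε : ℝ) (hε : 0 < ε) : ∃ C : ℝ, 1 ≤ C ∧ ∀ (L : ℕ) (k a0 b0 : ℤ)
    (S : Finset (ℤ × ℤ)), 1 ≤ L → k ≠ 0 →
    (∀ p ∈ S, p.1 * p.2 = k ∧ |p.1 - a0| ≤ L ∧ |p.2 - b0| ≤ L) → (S.card : ℝ) ≤ C * (L : ℝ) ^ ε := by
  classical
  obtain ⟨C0, hC0, hd⟩ := aux_arith (ε / 6) (by positivity)
  have hd := hd (fun n => n.divisors.card) (by simp) aux_divisors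
  refine ⟨2 * C0 * 2 ^ ε + 4, ?_, ?_⟩
  · have : 0 ≤ 2 * C0 * 2 ^ ε := by positivity
    linarith
  intro L k a0 b0 S hL hk hS
  have hL1 : (1 : ℝ) ≤ (L : ℝ) ^ ε := Real.one_le_rpow (by exact_mod_cast hL) hε.le
  by_cases hsmall : |k| ≤ (2 * (L : ℤ)) ^ 6
  · have h1 : S.card ≤ 2 * k.natAbs.divisors.card := by
      have hinj : Set.InjOn (fun p : ℤ × ℤ => p.1) (S : Set (ℤ × ℤ)) := by
        rintro ⟨a, b⟩ hp ⟨a', b'⟩ hq hpq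
        have e1 := (hS _ hp).1
        have e2 := (hS _ hq).1
        simp only at e1 e2 hpq
        subst hpq
        have : a ≠ 0 := by rintro rfl; simp at e1; exact hk e1.symm
        have : b = b' := mul_left_cancel₀ this (e1.trans e2.symm)
        rw [this]
      rw [← Finset.card_image_of_injOn hinj]
      have hsub : S.image (fun p : ℤ × ℤ => p.1) ⊆ k.natAbs.divisors.image (fun d : ℕ => (d : ℤ)) ∪
          k.natAbs.divisors.image (fun d : ℕ => -(d : ℤ)) := by
        intro a ha
        obtain ⟨p, hp, rfl⟩ := Finset.mem_image.1 ha
        have hdvd : p.1.natAbs ∈ k.natAbs.divisors := by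
          rw [Nat.mem_divisors]
          exact ⟨Int.natAbs_dvd_natAbs.2 (Dvd.intro _ (hS p hp).1), by simpa using hk⟩
        rw [Finset.mem_union, Finset.mem_image, Finset.mem_image]
        rcases Int.natAbs_eq p.1 with h | h
        · left; exact ⟨_, hdvd, h.symm⟩
        · right; exact ⟨_, hdvd, h.symm⟩
      refine (Finset.card_le_card hsub).trans ((Finset.card_union_le _ _).trans ?_)
      have := Finset.card_image_le (s := k.natAbs.divisors) (f := fun d : ℕ => (d : ℤ))
      have := Finset.card_image_le (s := k.natAbs.divisors) (f := fun d : ℕ => -(d : ℤ))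
      omega
    have h2 := hd k.natAbs (Int.natAbs_pos.2 hk)
    have h3 : (k.natAbs : ℝ) ^ (ε / 6) ≤ (2 : ℝ) ^ ε * (L : ℝ) ^ ε := by
      have := rpow_six 2 L ε
      rw [Nat.cast_two] at this
      rw [← this]
      gcongr
      have : (k.natAbs : ℤ) ≤ (((2 * L) ^ 6 : ℕ) : ℤ) := by rw [Int.natCast_natAbs]; exact_mod_cast hsmall
      exact_mod_cast this
    have h1' : (S.card : ℝ) ≤ 2 * k.natAbs.divisors.card := by exact_mod_cast h1
    calc (S.card : ℝ) ≤ 2 * k.natAbs.divisors.card := h1'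
      _ ≤ 2 * (C0 * ((2 : ℝ) ^ ε * (L : ℝ) ^ ε)) := by
        gcongr
        exact h2.trans (by gcongr)
      _ = 2 * C0 * 2 ^ ε * (L : ℝ) ^ ε := by ring
      _ ≤ _ := by gcongr; linarith
  · have hA : (S.filter (fun p => |k| ≤ p.1 ^ 2)).card ≤ 2 := by
      by_contra hc
      obtain ⟨p, hp, q, hq, r, hr, n1, n2, n3⟩ := Finset.two_lt_card.1 (not_le.1 hc)
      rw [Finset.mem_filter] at hp hq hr
      obtain ⟨p1, p2, p3⟩ := hS _ hp.1
      obtain ⟨q1, q2, q3⟩ := hS _ hq.1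
      obtain ⟨r1, r2, r3⟩ := hS _ hr.1
      have ne : ∀ p q : ℤ × ℤ, p.1 * p.2 = k → q.1 * q.2 = k → p ≠ q → p.1 ≠ q.1 := by
        rintro ⟨a, b⟩ ⟨a', b'⟩ e1 e2 hn hpq
        simp only at e1 e2 hpq
        subst hpq
        have : a ≠ 0 := by rintro rfl; simp at e1; exact hk e1.symm
        have : b = b' := mul_left_cancel₀ this (e1.trans e2.symm)
        exact hn (by rw [this])
      exact hsmall (hyper_three k p.1 p.2 q.1 q.2 r.1 r.2 _ hk p1 q1 r1 (ne _ _ p1 q1 n1) (ne _ _ p1 r1 n2)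
        (ne _ _ q1 r1 n3) (abs_sub_le_two p2 q2) (abs_sub_le_two p2 r2) (abs_sub_le_two q2 r2)
        hp.2 hq.2 hr.2)
    have hB : (S.filter (fun p => |k| ≤ p.2 ^ 2)).card ≤ 2 := by
      by_contra hc
      obtain ⟨p, hp, q, hq, r, hr, n1, n2, n3⟩ := Finset.two_lt_card.1 (not_le.1 hc)
      rw [Finset.mem_filter] at hp hq hr
      obtain ⟨p1, p2, p3⟩ := hS _ hp.1
      obtain ⟨q1, q2, q3⟩ := hS _ hq.1
      obtain ⟨r1, r2, r3⟩ := hS _ hr.1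
      have ne : ∀ p q : ℤ × ℤ, p.1 * p.2 = k → q.1 * q.2 = k → p ≠ q → p.2 ≠ q.2 := by
        rintro ⟨a, b⟩ ⟨a', b'⟩ e1 e2 hn hpq
        simp only at e1 e2 hpq
        subst hpq
        have : b ≠ 0 := by rintro rfl; simp at e1; exact hk e1.symm
        have : a = a' := mul_right_cancel₀ this (e1.trans e2.symm)
        exact hn (by rw [this])
      exact hsmall (hyper_three k p.2 p.1 q.2 q.1 r.2 r.1 _ hk (by rw [mul_comm, p1]) (by rw [mul_comm, q1])
        (by rw [mul_comm, r1]) (ne _ _ p1 q1 n1) (ne _ _ p1 r1 n2)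
        (ne _ _ q1 r1 n3) (abs_sub_le_two p3 q3) (abs_sub_le_two p3 r3) (abs_sub_le_two q3 r3)
        hp.2 hq.2 hr.2)
    have hsub : S ⊆ S.filter (fun p => |k| ≤ p.1 ^ 2) ∪ S.filter (fun p => |k| ≤ p.2 ^ 2) := by
      intro p hp
      rw [Finset.mem_union, Finset.mem_filter, Finset.mem_filter]
      have e := (hS p hp).1
      rw [← e, abs_mul]
      rcases le_total |p.1| |p.2| with h | h
      · right; refine ⟨hp, ?_⟩
        rw [← sq_abs p.2]; nlinarith [abs_nonneg p.1, abs_nonneg p.2]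
      · left; refine ⟨hp, ?_⟩
        rw [← sq_abs p.1]; nlinarith [abs_nonneg p.1, abs_nonneg p.2]
    have h4 : S.card ≤ 4 := by
      refine (Finset.card_le_card hsub).trans ((Finset.card_union_le _ _).trans ?_)
      omega
    have h4' : (S.card : ℝ) ≤ 4 := by exact_mod_cast h4
    have : 0 ≤ 2 * C0 * 2 ^ ε := by positivity
    nlinarith

lemma local_circle (ε : ℝ) (hε : 0 < ε) : ∃ C : ℝ, 1 ≤ C ∧ ∀ (L : ℕ) (R a0 b0 : ℤ)
    (S : Finset (ℤ × ℤ)), 1 ≤ L →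
    (∀ p ∈ S, p.1 ^ 2 + p.2 ^ 2 = R ∧ |p.1 - a0| ≤ L ∧ |p.2 - b0| ≤ L) →
    (S.card : ℝ) ≤ C * (L : ℝ) ^ ε := by
  classical
  obtain ⟨C0, hC0, hd⟩ := aux_arith (ε / 6) (by positivity)
  have hd := hd (fun n => (gset n).card) gset_one aux_gset
  refine ⟨C0 * 4 ^ ε + 2, ?_, ?_⟩
  · have : 0 ≤ C0 * 4 ^ ε := by positivity
    linarith
  intro L R a0 b0 S hL hS
  have hL1 : (1 : ℝ) ≤ (L : ℝ) ^ ε := Real.one_le_rpow (by exact_mod_cast hL) hε.le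
  by_cases hsmall : (0 < R ∧ R ≤ (4 * (L : ℤ)) ^ 6)
  · obtain ⟨hR, hsmall⟩ := hsmall
    lift R to ℕ using hR.le
    have h1 : S.card ≤ (gset R).card := by
      apply Finset.card_le_card_of_injOn (fun p : ℤ × ℤ => (⟨p.1, p.2⟩ : GaussianInt))
      · intro p hp
        have := (hS p hp).1
        simp only [Finset.mem_coe, mem_gset, Zsqrtd.norm_def]
        rw [← this]; ring
      · rintro ⟨a, b⟩ _ ⟨a', b'⟩ _ h
        simpa [Zsqrtd.ext_iff] using h
    have h2 := hd R (by exact_mod_cast hR)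
    have h3 : (R : ℝ) ^ (ε / 6) ≤ (4 : ℝ) ^ ε * (L : ℝ) ^ ε := by
      have := rpow_six 4 L ε
      rw [Nat.cast_ofNat] at this
      rw [← this]
      gcongr
      exact_mod_cast hsmall
    have h1' : (S.card : ℝ) ≤ (gset R).card := by exact_mod_cast h1
    calc (S.card : ℝ) ≤ (gset R).card := h1'
      _ ≤ (C0 * ((4 : ℝ) ^ ε * (L : ℝ) ^ ε)) := h2.trans (by gcongr)
      _ = C0 * 4 ^ ε * (L : ℝ) ^ ε := by ring
      _ ≤ _ := by gcongr; linarith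
  · have hA : S.card ≤ 2 := by
      by_contra hc
      obtain ⟨p, hp, q, hq, r, hr, n1, n2, n3⟩ := Finset.two_lt_card.1 (not_le.1 hc)
      obtain ⟨p1, p2, p3⟩ := hS _ hp
      obtain ⟨q1, q2, q3⟩ := hS _ hq
      obtain ⟨r1, r2, r3⟩ := hS _ hr
      have hub := circle_three R p.1 p.2 q.1 q.2 r.1 r.2 _ p1 q1 r1 n1 n2 n3
        (abs_sub_le_two p2 q2) (abs_sub_le_two p3 q3) (abs_sub_le_two p2 r2) (abs_sub_le_two p3 r3)
        (abs_sub_le_two q2 r2) (abs_sub_le_two q3 r3)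
      apply hsmall
      constructor
      · by_contra hR
        apply n1
        have e1 : p.1 = 0 := by nlinarith [sq_nonneg p.1, sq_nonneg p.2]
        have e2 : p.2 = 0 := by nlinarith [sq_nonneg p.1, sq_nonneg p.2]
        have e3 : q.1 = 0 := by nlinarith [sq_nonneg q.1, sq_nonneg q.2]
        have e4 : q.2 = 0 := by nlinarith [sq_nonneg q.1, sq_nonneg q.2]
        exact Prod.ext (e1.trans e3.symm) (e2.trans e4.symm)
      · have : 0 ≤ (L : ℤ) ^ 6 := by positivity
        nlinarith
    have h4' : (S.card : ℝ) ≤ 2 := by exact_mod_cast hA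
    have : 0 ≤ C0 * 4 ^ ε := by positivity
    nlinarith

/-! ### Counting pairs -/

lemma line_fib (ε : ℝ) (hε : 0 < ε) : ∃ C : ℝ, 1 ≤ C ∧ ∀ (A B : ℕ) (ν β s k : ℤ)
    (T : Finset (ℤ × ℤ)), 1 ≤ A → 1 ≤ B → |s| ≤ 1 → k ≠ 0 →
    (∀ p ∈ T, |p.1| ≤ A ∧ |p.2| ≤ B ∧ (ν - p.1) * (β + s * p.1 - p.2) = k) →
    (T.card : ℝ) ≤ C * ((A : ℝ) * B) ^ ε := by
  classical
  obtain ⟨C, hC, h⟩ := local_div ε hε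
  refine ⟨C * 2 ^ ε, ?_, ?_⟩
  · have : (1 : ℝ) ≤ 2 ^ ε := Real.one_le_rpow (by norm_num) hε.le
    nlinarith
  intro A B ν β s k T hA hB hs hk hT
  have hinj : Function.Injective (fun p : ℤ × ℤ => (ν - p.1, β + s * p.1 - p.2)) := by
    rintro ⟨a, b⟩ ⟨a', b'⟩ hab
    simp only [Prod.mk.injEq] at hab
    have h1 : a = a' := by linarith [hab.1]
    subst h1
    have h2 : b = b' := by linarith [hab.2]
    rw [h2]
  rw [← Finset.card_image_of_injective T hinj]
  have := h (2 * (A * B)) k ν β (T.image (fun p : ℤ × ℤ => (ν - p.1, β + s * p.1 - p.2)))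
    (by have := Nat.mul_le_mul hA hB; omega) hk ?_
  · refine this.trans (le_of_eq ?_)
    push_cast
    rw [Real.mul_rpow (by norm_num) (by positivity)]
    ring
  · intro q hq
    obtain ⟨p, hp, rfl⟩ := Finset.mem_image.1 hq
    obtain ⟨h1, h2, h3⟩ := hT p hp
    have hA' : (1 : ℤ) ≤ A := by exact_mod_cast hA
    have hB' : (1 : ℤ) ≤ B := by exact_mod_cast hB
    have hsp : |s * p.1| ≤ A := by
      rw [abs_mul]
      calc |s| * |p.1| ≤ 1 * (A : ℤ) := by gcongr
        _ = A := one_mul _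
    refine ⟨h3, ?_, ?_⟩
    · push_cast
      rw [show ν - p.1 - ν = -p.1 by ring, abs_neg]
      nlinarith
    · push_cast
      rw [show β + s * p.1 - p.2 - β = s * p.1 - p.2 by ring]
      have := abs_sub (s * p.1) p.2
      nlinarith

lemma mem_box {A : ℕ} {x : ℤ} : x ∈ Finset.Icc (-(A : ℤ)) A ↔ |x| ≤ A := by
  rw [Finset.mem_Icc, abs_le]

lemma card_box (A B : ℕ) (hA : 1 ≤ A) (hB : 1 ≤ B) :
    (Finset.Icc (-(A : ℤ)) A ×ˢ Finset.Icc (-(B : ℤ)) B).card ≤ 9 * (A * B) := by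
  rw [Finset.card_product, Int.card_Icc, Int.card_Icc]
  have h1 : ((A : ℤ) + 1 - -A).toNat ≤ 3 * A := by omega
  have h2 : ((B : ℤ) + 1 - -B).toNat ≤ 3 * B := by omega
  calc _ ≤ (3 * A) * (3 * B) := Nat.mul_le_mul h1 h2
    _ = _ := by ring

lemma pair_count (ε : ℝ) (hε : 0 < ε) : ∃ C : ℝ, 1 ≤ C ∧ ∀ (A B : ℕ) (ν₁ ν₂ β₁ β₂ s c : ℤ)
    (S : Finset ((ℤ × ℤ) × (ℤ × ℤ))), 1 ≤ A → 1 ≤ B → |s| ≤ 1 →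
    (∀ q ∈ S, |q.1.1| ≤ A ∧ |q.1.2| ≤ A ∧ |q.2.1| ≤ B ∧ |q.2.2| ≤ B ∧
      (ν₁ - q.1.1) * (β₁ + s * q.1.1 - q.2.1) + (ν₂ - q.1.2) * (β₂ + s * q.1.2 - q.2.2) = c ∧
      ¬ (ν₁ - q.1.1 = 0 ∧ ν₂ - q.1.2 = 0) ∧
      ¬ (β₁ + s * q.1.1 - q.2.1 = 0 ∧ β₂ + s * q.1.2 - q.2.2 = 0)) →
    (S.card : ℝ) ≤ C * ((A : ℝ) * B) ^ (1 + ε) := by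
  classical
  obtain ⟨C, hC, h⟩ := line_fib ε hε
  refine ⟨18 * C + 18, by linarith, ?_⟩
  intro A B ν₁ ν₂ β₁ β₂ s c S hA hB hs hS
  set K : ℕ := ⌊C * ((A : ℝ) * B) ^ ε⌋₊ with hK
  have hbox := card_box A B hA hB
  set box := Finset.Icc (-(A : ℤ)) A ×ˢ Finset.Icc (-(B : ℤ)) B with hboxdef
  set P1 := S.filter (fun q => (ν₂ - q.1.2) * (β₂ + s * q.1.2 - q.2.2) ≠ 0) with hP1
  set P2 := S.filter (fun q => (ν₁ - q.1.1) * (β₁ + s * q.1.1 - q.2.1) ≠ 0) with hP2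
  set P3 := S.filter (fun q => ν₁ - q.1.1 = 0 ∧ β₂ + s * q.1.2 - q.2.2 = 0) with hP3
  set P4 := S.filter (fun q => ν₂ - q.1.2 = 0 ∧ β₁ + s * q.1.1 - q.2.1 = 0) with hP4
  have c1 : P1.card ≤ K * box.card := by
    apply Finset.card_le_mul_card_image_of_maps_to (f := fun q => (q.1.1, q.2.1))
    · intro q hq
      obtain ⟨h1, h2, h3, h4, -⟩ := hS q (Finset.mem_filter.1 hq).1
      exact Finset.mem_product.2 ⟨mem_box.2 h1, mem_box.2 h3⟩
    · rintro ⟨x, y⟩ -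
      by_cases hk : c - (ν₁ - x) * (β₁ + s * x - y) = 0
      · rw [Finset.card_eq_zero.2]
        · exact Nat.zero_le _
        rw [Finset.filter_eq_empty_iff]
        intro q hq hxy
        obtain ⟨hq, hq0⟩ := Finset.mem_filter.1 hq
        obtain ⟨h1, h2, h3, h4, h5, -⟩ := hS q hq
        simp only [Prod.mk.injEq] at hxy
        rw [← hxy.1, ← hxy.2] at hk
        exact hq0 (by linarith)
      · apply Nat.le_floor
        have hinj : Set.InjOn (fun q : (ℤ × ℤ) × (ℤ × ℤ) => (q.1.2, q.2.2))
            (P1.filter (fun q => (q.1.1, q.2.1) = (x, y)) : Set ((ℤ × ℤ) × (ℤ × ℤ))) := by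
          rintro ⟨⟨a, b⟩, c, d⟩ h ⟨⟨a', b'⟩, c', d'⟩ h' hh
          simp at h h' hh ⊢
          omega
        rw [← Finset.card_image_of_injOn hinj]
        apply h A B ν₂ β₂ s _ _ hA hB hs hk
        intro p hp
        obtain ⟨q, hq, rfl⟩ := Finset.mem_image.1 hp
        obtain ⟨hq, hxy⟩ := Finset.mem_filter.1 hq
        obtain ⟨h1, h2, h3, h4, h5, -⟩ := hS q (Finset.mem_filter.1 hq).1
        simp only [Prod.mk.injEq] at hxy
        refine ⟨h2, h4, ?_⟩
        rw [← hxy.1, ← hxy.2]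
        linarith
  have c2 : P2.card ≤ K * box.card := by
    apply Finset.card_le_mul_card_image_of_maps_to (f := fun q => (q.1.2, q.2.2))
    · intro q hq
      obtain ⟨h1, h2, h3, h4, -⟩ := hS q (Finset.mem_filter.1 hq).1
      exact Finset.mem_product.2 ⟨mem_box.2 h2, mem_box.2 h4⟩
    · rintro ⟨x, y⟩ -
      by_cases hk : c - (ν₂ - x) * (β₂ + s * x - y) = 0
      · rw [Finset.card_eq_zero.2]
        · exact Nat.zero_le _
        rw [Finset.filter_eq_empty_iff]
        intro q hq hxy
        obtain ⟨hq, hq0⟩ := Finset.mem_filter.1 hq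
        obtain ⟨h1, h2, h3, h4, h5, -⟩ := hS q hq
        simp only [Prod.mk.injEq] at hxy
        rw [← hxy.1, ← hxy.2] at hk
        exact hq0 (by linarith)
      · apply Nat.le_floor
        have hinj : Set.InjOn (fun q : (ℤ × ℤ) × (ℤ × ℤ) => (q.1.1, q.2.1))
            (P2.filter (fun q => (q.1.2, q.2.2) = (x, y)) : Set ((ℤ × ℤ) × (ℤ × ℤ))) := by
          rintro ⟨⟨a, b⟩, c, d⟩ h ⟨⟨a', b'⟩, c', d'⟩ h' hh
          simp at h h' hh ⊢
          omega
        rw [← Finset.card_image_of_injOn hinj]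
        apply h A B ν₁ β₁ s _ _ hA hB hs hk
        intro p hp
        obtain ⟨q, hq, rfl⟩ := Finset.mem_image.1 hp
        obtain ⟨hq, hxy⟩ := Finset.mem_filter.1 hq
        obtain ⟨h1, h2, h3, h4, h5, -⟩ := hS q (Finset.mem_filter.1 hq).1
        simp only [Prod.mk.injEq] at hxy
        refine ⟨h1, h3, ?_⟩
        rw [← hxy.1, ← hxy.2]
        linarith
  have c3 : P3.card ≤ box.card := by
    apply Finset.card_le_card_of_injOn (fun q => (q.1.2, q.2.1))
    · intro q hq
      obtain ⟨h1, h2, h3, h4, -⟩ := hS q (Finset.mem_filter.1 hq).1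
      exact Finset.mem_product.2 ⟨mem_box.2 h2, mem_box.2 h3⟩
    · rintro ⟨⟨a, b⟩, c, d⟩ h ⟨⟨a', b'⟩, c', d'⟩ h' hh
      simp only [P3, Finset.coe_filter, Set.mem_ofPred_eq] at h h'
      simp only [Prod.mk.injEq] at hh
      obtain ⟨-, h1, h2⟩ := h
      obtain ⟨-, h1', h2'⟩ := h'
      obtain ⟨rfl, rfl⟩ := hh
      simp only [Prod.mk.injEq, true_and, and_true]
      constructor <;> linarith
  have c4 : P4.card ≤ box.card := by
    apply Finset.card_le_card_of_injOn (fun q => (q.1.1, q.2.2))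
    · intro q hq
      obtain ⟨h1, h2, h3, h4, -⟩ := hS q (Finset.mem_filter.1 hq).1
      exact Finset.mem_product.2 ⟨mem_box.2 h1, mem_box.2 h4⟩
    · rintro ⟨⟨a, b⟩, c, d⟩ h ⟨⟨a', b'⟩, c', d'⟩ h' hh
      simp only [P4, Finset.coe_filter, Set.mem_ofPred_eq] at h h'
      simp only [Prod.mk.injEq] at hh
      obtain ⟨-, h1, h2⟩ := h
      obtain ⟨-, h1', h2'⟩ := h'
      obtain ⟨rfl, rfl⟩ := hh
      simp only [Prod.mk.injEq, true_and, and_true]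
      constructor <;> linarith
  have hsub : S ⊆ (P1 ∪ P2) ∪ (P3 ∪ P4) := by
    intro q hq
    obtain ⟨h1, h2, h3, h4, h5, h6, h7⟩ := hS q hq
    simp only [P1, P2, P3, P4, Finset.mem_union, Finset.mem_filter, hq, true_and, ne_eq]
    by_cases z1 : (ν₂ - q.1.2) * (β₂ + s * q.1.2 - q.2.2) = 0
    swap
    · exact Or.inl (Or.inl z1)
    by_cases z2 : (ν₁ - q.1.1) * (β₁ + s * q.1.1 - q.2.1) = 0
    swap
    · exact Or.inl (Or.inr z2)
    right
    rcases mul_eq_zero.1 z1 with w1 | w1 <;> rcases mul_eq_zero.1 z2 with w2 | w2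
    · exact absurd ⟨w2, w1⟩ h6
    · exact Or.inr ⟨w1, w2⟩
    · exact Or.inl ⟨w2, w1⟩
    · exact absurd ⟨w2, w1⟩ h7
  have hcard : S.card ≤ (2 * K + 2) * (9 * (A * B)) := by
    have e0 := Finset.card_le_card hsub
    have e1 := Finset.card_union_le (P1 ∪ P2) (P3 ∪ P4)
    have e2 := Finset.card_union_le P1 P2
    have e3 := Finset.card_union_le P3 P4
    calc S.card ≤ (2 * K + 2) * box.card := by linarith
      _ ≤ _ := Nat.mul_le_mul_left _ hbox
  have hKle : (K : ℝ) ≤ C * ((A : ℝ) * B) ^ ε := Nat.floor_le (by positivity)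
  have hA1 : (1 : ℝ) ≤ A := by exact_mod_cast hA
  have hB1 : (1 : ℝ) ≤ B := by exact_mod_cast hB
  have hAB : (1 : ℝ) ≤ (A : ℝ) * B := by nlinarith
  have hx1 : (1 : ℝ) ≤ ((A : ℝ) * B) ^ ε := Real.one_le_rpow hAB hε.le
  have hcard' : (S.card : ℝ) ≤ (2 * K + 2) * (9 * (A * B)) := by exact_mod_cast hcard
  calc (S.card : ℝ) ≤ (2 * K + 2) * (9 * (A * B)) := hcard'
    _ ≤ (2 * (C * ((A : ℝ) * B) ^ ε) + 2 * ((A : ℝ) * B) ^ ε) * (9 * (A * B)) := by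
      gcongr
      linarith
    _ = (18 * C + 18) * (((A : ℝ) * B) * ((A : ℝ) * B) ^ ε) := by ring
    _ = _ := by rw [Real.rpow_add (by linarith), Real.rpow_one]

lemma circle_count (ε : ℝ) (hε : 0 < ε) : ∃ C : ℝ, 1 ≤ C ∧ ∀ (A B : ℕ) (n : ℤ × ℤ) (m : ℤ)
    (S : Finset ((ℤ × ℤ) × (ℤ × ℤ))), 1 ≤ A → 1 ≤ B →
    (∀ q ∈ S, |q.1.1| ≤ A ∧ |q.1.2| ≤ A ∧ |q.2.1| ≤ B ∧ |q.2.2| ≤ B ∧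
      (n.1 + q.2.1 - 2 * q.1.1) ^ 2 + (n.2 + q.2.2 - 2 * q.1.2) ^ 2 =
        (n.1 - q.2.1) ^ 2 + (n.2 - q.2.2) ^ 2 - 2 * m) →
    (S.card : ℝ) ≤ C * ((B : ℝ) ^ 2 * (A : ℝ) ^ ε) := by
  classical
  obtain ⟨C, hC, h⟩ := local_circle ε hε
  refine ⟨9 * (C * 2 ^ ε), ?_, ?_⟩
  · have : (1 : ℝ) ≤ 2 ^ ε := Real.one_le_rpow (by norm_num) hε.le
    nlinarith
  intro A B n m S hA hB hS
  set K : ℕ := ⌊C * ((2 * A : ℕ) : ℝ) ^ ε⌋₊ with hK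
  have hbox := card_box B B hB hB
  set box := Finset.Icc (-(B : ℤ)) B ×ˢ Finset.Icc (-(B : ℤ)) B with hboxdef
  have c1 : S.card ≤ K * box.card := by
    apply Finset.card_le_mul_card_image_of_maps_to (f := fun q => q.2)
    · intro q hq
      obtain ⟨h1, h2, h3, h4, -⟩ := hS q hq
      exact Finset.mem_product.2 ⟨mem_box.2 h3, mem_box.2 h4⟩
    · rintro ⟨x, y⟩ -
      apply Nat.le_floor
      have hinj : Set.InjOn (fun q : (ℤ × ℤ) × (ℤ × ℤ) => (n.1 + x - 2 * q.1.1, n.2 + y - 2 * q.1.2))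
          (S.filter (fun q => q.2 = (x, y)) : Set ((ℤ × ℤ) × (ℤ × ℤ))) := by
        rintro ⟨⟨a, b⟩, c, d⟩ h ⟨⟨a', b'⟩, c', d'⟩ h' hh
        simp at h h' hh ⊢
        omega
      rw [← Finset.card_image_of_injOn hinj]
      apply h (2 * A) ((n.1 - x) ^ 2 + (n.2 - y) ^ 2 - 2 * m) (n.1 + x) (n.2 + y) _ (by omega)
      intro p hp
      obtain ⟨q, hq, rfl⟩ := Finset.mem_image.1 hp
      obtain ⟨hq, hxy⟩ := Finset.mem_filter.1 hq
      obtain ⟨h1, h2, h3, h4, h5⟩ := hS q hq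
      rw [hxy] at h5
      rw [abs_le] at h1 h2
      refine ⟨h5, ?_, ?_⟩
      · rw [abs_le]; push_cast; constructor <;> linarith [h1.1, h1.2]
      · rw [abs_le]; push_cast; constructor <;> linarith [h2.1, h2.2]
  have hKle : (K : ℝ) ≤ C * ((2 * A : ℕ) : ℝ) ^ ε := Nat.floor_le (by positivity)
  have c2 : S.card ≤ K * (9 * (B * B)) := c1.trans (Nat.mul_le_mul_left _ hbox)
  have c3 : (S.card : ℝ) ≤ K * (9 * (B * B)) := by exact_mod_cast c2
  calc (S.card : ℝ) ≤ K * (9 * (B * B)) := c3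
    _ ≤ (C * ((2 * A : ℕ) : ℝ) ^ ε) * (9 * (B * B)) := by gcongr
    _ = _ := by
      push_cast
      rw [Real.mul_rpow (by norm_num) (by positivity)]
      ring

/-! ### The main theorem -/

lemma sim_bound {k : ℕ} {n : ℤ × ℤ} (h : simDyadic (2 ^ k) n) :
    |n.1| ≤ ((2 ^ k : ℕ) : ℤ) ∧ |n.2| ≤ ((2 ^ k : ℕ) : ℤ) := by
  have h1 : znorm n ≤ 2 ^ k := by
    rcases h with ⟨h, h'⟩ | ⟨_, _, h⟩
    · rw [h]; exact h'
    · exact h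
  unfold znorm at h1
  have e1 : |(n.1 : ℝ)| ≤ 2 ^ k := (Real.abs_le_sqrt (by nlinarith [sq_nonneg (n.2 : ℝ)])).trans h1
  have e2 : |(n.2 : ℝ)| ≤ 2 ^ k := (Real.abs_le_sqrt (by nlinarith [sq_nonneg (n.1 : ℝ)])).trans h1
  constructor
  · exact_mod_cast e1
  · exact_mod_cast e2

theorem stmt5 (ε : ℝ) (hε : 0 < ε) :
    ∃ C : ℝ, 0 < C ∧ ∀ N N₁ N₂ N₃ : ℝ,
      IsDyadic N → IsDyadic N₁ → IsDyadic N₂ → IsDyadic N₃ → ∀ m : ℤ, ∀ n : ℤ × ℤ,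
      (({t : (ℤ × ℤ) × (ℤ × ℤ) × (ℤ × ℤ) |
          SMem N N₁ N₂ N₃ m n t.1 t.2.1 t.2.2}).ncard : ℝ) ≤
        C * min (min (N₂ ^ 2 * (min N₁ N₃) ^ ε) ((N₁ * N₂) ^ (1 + ε)))
                (min ((N₁ * N₃) ^ (1 + ε)) ((N₂ * N₃) ^ (1 + ε))) := by
  classical
  obtain ⟨C1, hC1, hp⟩ := pair_count ε hε
  obtain ⟨C2, hC2, hc⟩ := circle_count ε hε
  refine ⟨C1 + C2, by linarith, ?_⟩
  rintro N N₁ N₂ N₃ - ⟨k₁, rfl⟩ ⟨k₂, rfl⟩ ⟨k₃, rfl⟩ m n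
  set S := {t : (ℤ × ℤ) × (ℤ × ℤ) × (ℤ × ℤ) |
          SMem N (2 ^ k₁) (2 ^ k₂) (2 ^ k₃) m n t.1 t.2.1 t.2.2} with hSdef
  by_cases hfin : S.Finite
  swap
  · rw [Set.Infinite.ncard hfin]
    simp only [Nat.cast_zero]
    have : 0 < C1 + C2 := by linarith
    positivity
  obtain ⟨F, hF⟩ := hfin.exists_finset_coe
  have hmem : ∀ t ∈ F, SMem N (2 ^ k₁) (2 ^ k₂) (2 ^ k₃) m n t.1 t.2.1 t.2.2 := by
    intro t ht
    have : t ∈ S := by rw [← hF]; exact ht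
    exact this
  rw [← hF, Set.ncard_coe_finset]
  -- the basic facts about members
  have basic : ∀ t ∈ F, ∃ a b c d : ℤ, t = ((a, b), (a + c - n.1, b + d - n.2), (c, d)) ∧
      |a| ≤ ((2 ^ k₁ : ℕ) : ℤ) ∧ |b| ≤ ((2 ^ k₁ : ℕ) : ℤ) ∧
      |a + c - n.1| ≤ ((2 ^ k₂ : ℕ) : ℤ) ∧ |b + d - n.2| ≤ ((2 ^ k₂ : ℕ) : ℤ) ∧
      |c| ≤ ((2 ^ k₃ : ℕ) : ℤ) ∧ |d| ≤ ((2 ^ k₃ : ℕ) : ℤ) ∧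
      2 * ((n.1 - a) * (n.1 - c) + (n.2 - b) * (n.2 - d)) = m ∧
      ¬ (n.1 - a = 0 ∧ n.2 - b = 0) ∧ ¬ (n.1 - c = 0 ∧ n.2 - d = 0) := by
    rintro ⟨⟨a, b⟩, ⟨x, y⟩, ⟨c, d⟩⟩ ht
    obtain ⟨h1, h2, h3, h4, -, h5, h6, h7⟩ := hmem _ ht
    obtain ⟨n1, n2⟩ := n
    simp only [Prod.mk_sub_mk, Prod.mk_add_mk, Prod.mk.injEq] at h1
    obtain ⟨e1, e2⟩ := h1
    have ex : x = a + c - n1 := by linarith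
    have ey : y = b + d - n2 := by linarith
    subst ex ey
    refine ⟨a, b, c, d, rfl, (sim_bound h5).1, (sim_bound h5).2, (sim_bound h6).1, (sim_bound h6).2,
      (sim_bound h7).1, (sim_bound h7).2, ?_, ?_, ?_⟩
    · rw [← h4]; simp only [phiFn, nsq]; ring
    · rintro ⟨z1, z2⟩
      simp only at z1 z2
      exact h2 (Prod.ext (by simp only; linarith) (by simp only; linarith))
    · rintro ⟨z1, z2⟩
      simp only at z1 z2
      exact h3 (Prod.ext (by simp only; linarith) (by simp only; linarith))
  have one_le : ∀ k : ℕ, 1 ≤ 2 ^ k := fun k => Nat.one_le_two_pow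
  have inj12 : Set.InjOn (fun t : (ℤ × ℤ) × (ℤ × ℤ) × (ℤ × ℤ) => (t.1, t.2.1)) (F : Set _) := by
    intro t ht t' ht' h
    obtain ⟨a, b, c, d, rfl, -⟩ := basic t ht
    obtain ⟨a', b', c', d', rfl, -⟩ := basic t' ht'
    simp at h ⊢
    omega
  have inj13 : Set.InjOn (fun t : (ℤ × ℤ) × (ℤ × ℤ) × (ℤ × ℤ) => (t.1, t.2.2)) (F : Set _) := by
    intro t ht t' ht' h
    obtain ⟨a, b, c, d, rfl, -⟩ := basic t ht
    obtain ⟨a', b', c', d', rfl, -⟩ := basic t' ht'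
    simp at h ⊢
    omega
  have inj32 : Set.InjOn (fun t : (ℤ × ℤ) × (ℤ × ℤ) × (ℤ × ℤ) => (t.2.2, t.2.1)) (F : Set _) := by
    intro t ht t' ht' h
    obtain ⟨a, b, c, d, rfl, -⟩ := basic t ht
    obtain ⟨a', b', c', d', rfl, -⟩ := basic t' ht'
    simp at h ⊢
    omega
  have b12 : (F.card : ℝ) ≤ C1 * ((2 : ℝ) ^ k₁ * 2 ^ k₂) ^ (1 + ε) := by
    rw [← Finset.card_image_of_injOn inj12]
    have := hp (2 ^ k₁) (2 ^ k₂) n.1 n.2 0 0 1 (m / 2) (F.image fun t => (t.1, t.2.1)) (one_le _) (one_le _)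
      (by norm_num) ?_
    · simpa using this
    intro q hq
    obtain ⟨t, ht, rfl⟩ := Finset.mem_image.1 hq
    obtain ⟨a, b, c, d, rfl, h1, h2, h3, h4, h5, h6, h7, h8, h9⟩ := basic t ht
    refine ⟨h1, h2, h3, h4, ?_, h8, ?_⟩
    · simp only
      rw [← h7, Int.mul_ediv_cancel_left _ (by norm_num)]; ring
    · rintro ⟨z1, z2⟩
      simp only at z1 z2
      exact h9 ⟨by linarith, by linarith⟩
  have b32 : (F.card : ℝ) ≤ C1 * ((2 : ℝ) ^ k₂ * 2 ^ k₃) ^ (1 + ε) := by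
    rw [← Finset.card_image_of_injOn inj32, mul_comm ((2 : ℝ) ^ k₂)]
    have := hp (2 ^ k₃) (2 ^ k₂) n.1 n.2 0 0 1 (m / 2) (F.image fun t => (t.2.2, t.2.1)) (one_le _) (one_le _)
      (by norm_num) ?_
    · simpa using this
    intro q hq
    obtain ⟨t, ht, rfl⟩ := Finset.mem_image.1 hq
    obtain ⟨a, b, c, d, rfl, h1, h2, h3, h4, h5, h6, h7, h8, h9⟩ := basic t ht
    refine ⟨h5, h6, h3, h4, ?_, h9, ?_⟩
    · simp only
      rw [← h7, Int.mul_ediv_cancel_left _ (by norm_num)]; ring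
    · rintro ⟨z1, z2⟩
      simp only at z1 z2
      exact h8 ⟨by linarith, by linarith⟩
  have b13 : (F.card : ℝ) ≤ C1 * ((2 : ℝ) ^ k₁ * 2 ^ k₃) ^ (1 + ε) := by
    rw [← Finset.card_image_of_injOn inj13]
    have := hp (2 ^ k₁) (2 ^ k₃) n.1 n.2 n.1 n.2 0 (m / 2) (F.image fun t => (t.1, t.2.2)) (one_le _) (one_le _)
      (by norm_num) ?_
    · simpa using this
    intro q hq
    obtain ⟨t, ht, rfl⟩ := Finset.mem_image.1 hq
    obtain ⟨a, b, c, d, rfl, h1, h2, h3, h4, h5, h6, h7, h8, h9⟩ := basic t ht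
    refine ⟨h1, h2, h5, h6, ?_, h8, ?_⟩
    · simp only
      rw [← h7, Int.mul_ediv_cancel_left _ (by norm_num)]; ring
    · rintro ⟨z1, z2⟩
      simp only at z1 z2
      exact h9 ⟨by linarith, by linarith⟩
  have d1 : (F.card : ℝ) ≤ C2 * (((2 : ℝ) ^ k₂) ^ 2 * ((2 : ℝ) ^ k₁) ^ ε) := by
    rw [← Finset.card_image_of_injOn inj12]
    have := hc (2 ^ k₁) (2 ^ k₂) n m (F.image fun t => (t.1, t.2.1)) (one_le _) (one_le _) ?_
    · simpa using this
    intro q hq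
    obtain ⟨t, ht, rfl⟩ := Finset.mem_image.1 hq
    obtain ⟨a, b, c, d, rfl, h1, h2, h3, h4, h5, h6, h7, h8, h9⟩ := basic t ht
    refine ⟨h1, h2, h3, h4, ?_⟩
    simp only
    rw [← h7]; ring
  have d3 : (F.card : ℝ) ≤ C2 * (((2 : ℝ) ^ k₂) ^ 2 * ((2 : ℝ) ^ k₃) ^ ε) := by
    rw [← Finset.card_image_of_injOn inj32]
    have := hc (2 ^ k₃) (2 ^ k₂) n m (F.image fun t => (t.2.2, t.2.1)) (one_le _) (one_le _) ?_
    · simpa using this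
    intro q hq
    obtain ⟨t, ht, rfl⟩ := Finset.mem_image.1 hq
    obtain ⟨a, b, c, d, rfl, h1, h2, h3, h4, h5, h6, h7, h8, h9⟩ := basic t ht
    refine ⟨h5, h6, h3, h4, ?_⟩
    simp only
    rw [← h7]; ring
  have up1 : ∀ x : ℝ, 0 ≤ x → (F.card : ℝ) ≤ C1 * x → (F.card : ℝ) ≤ (C1 + C2) * x := by
    intro x hx h
    nlinarith
  have up2 : ∀ x : ℝ, 0 ≤ x → (F.card : ℝ) ≤ C2 * x → (F.card : ℝ) ≤ (C1 + C2) * x := by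
    intro x hx h
    nlinarith
  have hpos : 0 ≤ C1 + C2 := by linarith
  rw [mul_min_of_nonneg _ _ hpos, mul_min_of_nonneg _ _ hpos, mul_min_of_nonneg _ _ hpos]
  refine le_min (le_min ?_ ?_) (le_min ?_ ?_)
  · rcases min_choice ((2 : ℝ) ^ k₁) ((2 : ℝ) ^ k₃) with h | h
    · rw [h]; exact up2 _ (by positivity) d1
    · rw [h]; exact up2 _ (by positivity) d3
  · exact up1 _ (by positivity) b12
  · exact up1 _ (by positivity) b13
  · exact up1 _ (by positivity) b32
end
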